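/- arXiv:2004.05555 — 10 statements merged into one kernel-verified Lean document; each statement's English description precedes it below -/
import Mathlib

section
/- Let G be a group and λ : G → Aut(G) a group homomorphism, writing λ_a for λ(a). Then the set H_λ = {(λ_a, a) : a ∈ G} is a subgroup of the holomorph Hol G = Aut(G) ⋉ G if and only if b⁻¹·λ_a(b) ∈ ker λ for all a, b ∈ G. -/
/-- The holomorph of a group `G`: the semidirect product `Aut(G) ⋉ G` whose
multiplication is `(f, a) * (g, b) = (f * g, a * f b)`.  (In Mathlib's
`SemidirectProduct` convention the group component is the `left` field and the
automorphism component is the `right` field.) -/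
abbrev Hol (G : Type*) [Group G] : Type _ :=
  SemidirectProduct G (MulAut G) (MonoidHom.id (MulAut G))

/-!
In a semidirect product `N ⋊[φ] K`, the product `⟨a, f a⟩ * ⟨b, f b⟩` is
`⟨a * φ (f a) b, f a * f b⟩`, so the graph of a map `f : N → K` is closed under multiplication
exactly when `f (a * φ (f a) b) = f a * f b`. This identity already forces closure under inverses,
because for `b = φ (f a)⁻¹ a⁻¹` its left-hand side is `f 1 = 1`. When `f` is a homomorphism, `f a`
cancels, leaving `f (φ (f a) b) = f b`, that is, `b⁻¹ * φ (f a) b ∈ f.ker`.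
-/

section RelRotaBaxter

variable {N K : Type*} [Group N] [Group K] (φ : K →* MulAut N)

/-- A relative Rota–Baxter operator on `N` with respect to an action `φ` of `K` on `N`: a map
whose values multiply according to the twisted product `a * φ (f a) b` on `N`. For `K = MulAut N`
acting tautologically, these are the lambda maps of skew braces with additive group `N`. -/
def IsRelRotaBaxter (f : N → K) : Prop :=
  ∀ a b, f (a * φ (f a) b) = f a * f b

/-- The graph of a map `f : N → K` as a subset of `N ⋊[φ] K`, used to express subgroups of the
semidirect product as functions. It generalizes `H_λ`, which is the case `K = MulAut N`. -/
def semidirectGraph (f : N → K) : Set (N ⋊[φ] K) :=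
  {x | ∃ a, x = ⟨a, f a⟩}

variable {φ} {f : N → K}

theorem mem_semidirectGraph_iff {x : N ⋊[φ] K} :
    x ∈ semidirectGraph φ f ↔ f x.left = x.right := by
  constructor
  · rintro ⟨a, rfl⟩
    rfl
  · exact fun h ↦ ⟨x.left, SemidirectProduct.ext rfl h.symm⟩

namespace IsRelRotaBaxter

theorem map_one (hf : IsRelRotaBaxter φ f) : f 1 = 1 := by
  simpa using hf 1 1

theorem map_twisted_inv (hf : IsRelRotaBaxter φ f) (a : N) :
    f (φ (f a)⁻¹ a⁻¹) = (f a)⁻¹ := by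
  refine eq_inv_of_mul_eq_one_right ?_
  calc f a * f (φ (f a)⁻¹ a⁻¹)
      = f (a * φ (f a) (φ (f a)⁻¹ a⁻¹)) := (hf _ _).symm
    _ = f 1 := by rw [map_inv φ, MulAut.apply_inv_self, mul_inv_cancel]
    _ = 1 := hf.map_one

/-- The graph of a relative Rota–Baxter operator, as a subgroup of the semidirect product. -/
def graphSubgroup (hf : IsRelRotaBaxter φ f) : Subgroup (N ⋊[φ] K) where
  carrier := semidirectGraph φ f
  one_mem' := mem_semidirectGraph_iff.2 hf.map_one
  mul_mem' := by
    rintro _ _ ⟨a, rfl⟩ ⟨b, rfl⟩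
    exact mem_semidirectGraph_iff.2 (hf a b)
  inv_mem' := by
    rintro _ ⟨a, rfl⟩
    exact mem_semidirectGraph_iff.2 (hf.map_twisted_inv a)

end IsRelRotaBaxter

theorem exists_subgroup_coe_eq_semidirectGraph_iff :
    (∃ H : Subgroup (N ⋊[φ] K), (H : Set (N ⋊[φ] K)) = semidirectGraph φ f) ↔
      IsRelRotaBaxter φ f := by
  constructor
  · rintro ⟨H, hH⟩ a b
    have graph_mem (c : N) : ⟨c, f c⟩ ∈ H := by
      rw [← SetLike.mem_coe, hH]
      exact ⟨c, rfl⟩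
    have mul_mem_graph : (⟨a, f a⟩ * ⟨b, f b⟩ : N ⋊[φ] K) ∈ semidirectGraph φ f :=
      hH ▸ H.mul_mem (graph_mem a) (graph_mem b)
    exact mem_semidirectGraph_iff.1 mul_mem_graph
  · exact fun hf ↦ ⟨hf.graphSubgroup, rfl⟩

theorem isRelRotaBaxter_monoidHom_iff {f : N →* K} :
    IsRelRotaBaxter φ f ↔ ∀ a b, b⁻¹ * φ (f a) b ∈ f.ker := by
  refine forall₂_congr fun a b ↦ ?_
  rw [map_mul, mul_right_inj, MonoidHom.eq_iff]

end RelRotaBaxter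

theorem stmt0_general {N K : Type*} [Group N] [Group K] (φ : K →* MulAut N) (f : N →* K) :
    (∃ H : Subgroup (N ⋊[φ] K), (H : Set (N ⋊[φ] K)) = {x | ∃ a, x = ⟨a, f a⟩}) ↔
      ∀ a b, b⁻¹ * φ (f a) b ∈ f.ker :=
  exists_subgroup_coe_eq_semidirectGraph_iff.trans isRelRotaBaxter_monoidHom_iff

/-- For a group homomorphism `λ : G →* Aut G`, the set
`H_λ = {(λ_a, a) | a ∈ G}` is a subgroup of `Hol G` if and only if
`b⁻¹ * λ_a b ∈ ker λ` for all `a b : G`. -/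
theorem stmt0 {G : Type*} [Group G] (lam : G →* MulAut G) :
    (∃ H : Subgroup (Hol G),
        (H : Set (Hol G)) = {x : Hol G | ∃ a : G, x = ⟨a, lam a⟩}) ↔
      ∀ a b : G, b⁻¹ * lam a b ∈ lam.ker :=
  stmt0_general (MonoidHom.id (MulAut G)) lam
end

section
/- Let G be a group and λ : G → Aut(G) a group homomorphism, writing λ_a for λ(a), such that b⁻¹·λ_a(b) ∈ ker λ for all a, b ∈ G. Then the subgroup H_λ = {(λ_a, a) : a ∈ G} of Hol G is regular: for every b ∈ G there exists a unique a ∈ G with a·λ_a(b) = 1, namely a = λ_{b⁻¹}(b⁻¹). -/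
/-! The kernel condition says that `λ_{λ_a(b)} = λ_b`, so `λ` turns the product `a * λ_a(b)` into
`λ_a * λ_b`. This product is the first coordinate of `(λ_a, a) * (λ_b, b)`, whence the graph of `λ`
is closed under multiplication. Solving `a * λ_a(b) = 1` for `a` amounts to inverting `(λ_b, b)`
inside the graph. -/

section RelativeRotaBaxter

variable {N G : Type*} [Group N] [Group G] {φ : G →* MulAut N}

/-- `lam : N → G` is a relative Rota–Baxter operator for the action `φ` of `G` on `N`. These are the
maps whose graph is a subgroup of `N ⋊[φ] G`; for `G = MulAut N` acting tautologically they are also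
called gamma functions. -/
def IsRelativeRotaBaxter (φ : G →* MulAut N) (lam : N → G) : Prop :=
  ∀ a b : N, lam (a * φ (lam a) b) = lam a * lam b

theorem isRelativeRotaBaxter_monoidHom_iff {lam : N →* G} :
    IsRelativeRotaBaxter φ lam ↔ ∀ a b : N, b⁻¹ * φ (lam a) b ∈ lam.ker := by
  refine forall₂_congr fun a b ↦ ?_
  rw [map_mul, mul_right_inj, MonoidHom.mem_ker, map_mul, map_inv, inv_mul_eq_one, eq_comm]

namespace IsRelativeRotaBaxter

variable {lam : N → G}

protected theorem map_one (h : IsRelativeRotaBaxter φ lam) : lam 1 = 1 := by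
  simpa only [map_one, mul_one, left_eq_mul] using h 1 1

theorem map_inv_apply_inv (h : IsRelativeRotaBaxter φ lam) (b : N) :
    lam (φ (lam b)⁻¹ b⁻¹) = (lam b)⁻¹ := by
  refine eq_inv_of_mul_eq_one_right ?_
  rw [← h, map_inv φ, MulAut.apply_inv_self, mul_inv_cancel, h.map_one]

theorem mul_apply_eq_one_iff (h : IsRelativeRotaBaxter φ lam) {a b : N} :
    a * φ (lam a) b = 1 ↔ a = φ (lam b)⁻¹ b⁻¹ := by
  constructor
  · intro hab
    have lam_a : lam a = (lam b)⁻¹ :=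
      eq_inv_of_mul_eq_one_left (by rw [← h, hab, h.map_one])
    rw [← lam_a, map_inv]
    exact eq_inv_of_mul_eq_one_left hab
  · rintro rfl
    rw [h.map_inv_apply_inv, ← map_mul, inv_mul_cancel, map_one]

/-- The graph of a relative Rota–Baxter operator `lam`, as a subgroup of the semidirect product; it
is the subgroup `H_λ` when `φ` is the tautological action of `MulAut N`. -/
def graph (h : IsRelativeRotaBaxter φ lam) : Subgroup (N ⋊[φ] G) where
  carrier := {x | ∃ a : N, x = ⟨a, lam a⟩}
  mul_mem' := by
    rintro _ _ ⟨a, rfl⟩ ⟨b, rfl⟩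
    exact ⟨a * φ (lam a) b, SemidirectProduct.ext rfl (h a b).symm⟩
  one_mem' := ⟨1, SemidirectProduct.ext rfl h.map_one.symm⟩
  inv_mem' := by
    rintro _ ⟨a, rfl⟩
    exact ⟨φ (lam a)⁻¹ a⁻¹, SemidirectProduct.ext rfl (h.map_inv_apply_inv a).symm⟩

end IsRelativeRotaBaxter

theorem stmt1_general {lam : N → G} (h : IsRelativeRotaBaxter φ lam) :
    (∃ H : Subgroup (N ⋊[φ] G),
        (H : Set (N ⋊[φ] G)) = {x : N ⋊[φ] G | ∃ a : N, x = ⟨a, lam a⟩}) ∧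
      ∀ b a : N, a * φ (lam a) b = 1 ↔ a = φ (lam b)⁻¹ b⁻¹ :=
  ⟨⟨h.graph, rfl⟩, fun _ _ ↦ h.mul_apply_eq_one_iff⟩

end RelativeRotaBaxter

/-- If `λ : G →* Aut G` is a group homomorphism satisfying
`b⁻¹ * λ_a b ∈ ker λ` for all `a b : G`, then `H_λ = {(λ_a, a) | a ∈ G}` is a
subgroup of `Hol G` and it is regular: for every `b : G` there is a unique
`a : G` with `a * λ_a b = 1`, namely `a = λ_{b⁻¹} (b⁻¹)`. -/
theorem stmt1 {G : Type*} [Group G] (lam : G →* MulAut G)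
    (h : ∀ a b : G, b⁻¹ * lam a b ∈ lam.ker) :
    (∃ H : Subgroup (Hol G),
        (H : Set (Hol G)) = {x : Hol G | ∃ a : G, x = ⟨a, lam a⟩}) ∧
      ∀ b a : G, a * lam a b = 1 ↔ a = lam b⁻¹ b⁻¹ := by
  simpa only [map_inv lam, MonoidHom.id_apply] using
    stmt1_general (isRelativeRotaBaxter_monoidHom_iff (φ := MonoidHom.id (MulAut G)).2 h)
end

section
/- Let (G,·,∘) be a λ-homomorphic skew left brace and set G₀ = {a ∈ G : λ_a = id} (the kernel of λ). Then: (i) G₀ is a normal subgroup of both (G,·) and (G,∘); (ii) the two operations coincide on G₀, i.e., a ∘ b = a·b whenever a ∈ G₀; and (iii) (a·b)⁻¹·(a∘b) ∈ G₀ for all a, b ∈ G, so the operations induced by · and ∘ on the quotient G/G₀ coincide. In particular every λ-homomorphic skew left brace is meta-trivial (an extension of a trivial skew brace by a trivial skew brace). -/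
/-!
For every skew left brace, `a ↦ λ_a` is a homomorphism `(G, ∘) → Aut (G, ·)`. If it is also a
homomorphism on `(G, ·)`, then `G₀` is the kernel of a homomorphism for both group structures,
hence normal in both. Moreover `λ_(a * b) = λ_a λ_b = λ_(a ∘ b)`, so `a * b` and `a ∘ b` lie in
the same coset of `G₀`.
-/

/-- A skew left brace structure on a group `(G, ·)`: a second group operation
`circ` (with inverse `cinv`, and necessarily with the same identity element `1`)
satisfying the skew brace compatibility law
`a ∘ (b * c) = (a ∘ b) * a⁻¹ * (a ∘ c)`. -/
structure SkewBrace (G : Type*) [Group G] where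
  circ : G → G → G
  cinv : G → G
  circ_assoc : ∀ a b c : G, circ (circ a b) c = circ a (circ b c)
  one_circ : ∀ a : G, circ 1 a = a
  circ_one : ∀ a : G, circ a 1 = a
  cinv_circ : ∀ a : G, circ (cinv a) a = 1
  circ_cinv : ∀ a : G, circ a (cinv a) = 1
  compat : ∀ a b c : G, circ a (b * c) = circ a b * a⁻¹ * circ a c

namespace SkewBrace

variable {G : Type*} [Group G] (B : SkewBrace G)

/-- The automorphism `λ_a : b ↦ a⁻¹ * (a ∘ b)` of `(G, ·)` attached to an element `a` of a skew
left brace. -/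
def lambda (a : G) : MulAut G where
  toFun b := a⁻¹ * B.circ a b
  invFun b := B.circ (B.cinv a) (a * b)
  left_inv b := by simp only [mul_inv_cancel_left, ← B.circ_assoc, B.cinv_circ, B.one_circ]
  right_inv b := by simp only [← B.circ_assoc, B.circ_cinv, B.one_circ, inv_mul_cancel_left]
  map_mul' b c := by simp only [B.compat, mul_assoc]

theorem lambda_apply (a b : G) : B.lambda a b = a⁻¹ * B.circ a b := rfl

theorem mul_lambda_apply (a b : G) : a * B.lambda a b = B.circ a b :=
  mul_inv_cancel_left a (B.circ a b)

theorem circ_mul (a b c : G) : B.circ a (b * c) = B.circ a b * B.lambda a c := by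
  rw [B.compat, lambda_apply, mul_assoc]

theorem lambda_one : B.lambda 1 = 1 := by
  ext b
  rw [lambda_apply, B.one_circ, inv_one, one_mul, MulAut.one_apply]

theorem lambda_circ (a b : G) : B.lambda (B.circ a b) = B.lambda a * B.lambda b := by
  ext c
  rw [MulAut.mul_apply, lambda_apply, inv_mul_eq_iff_eq_mul]
  calc B.circ (B.circ a b) c = B.circ a (b * B.lambda b c) := by
        rw [B.circ_assoc, mul_lambda_apply]
    _ = B.circ a b * B.lambda a (B.lambda b c) := B.circ_mul a b _

theorem lambda_cinv (a : G) : B.lambda (B.cinv a) = (B.lambda a)⁻¹ :=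
  eq_inv_of_mul_eq_one_left <| by rw [← lambda_circ, B.cinv_circ, lambda_one]

theorem lambda_eq_one_iff {a : G} : B.lambda a = 1 ↔ ∀ b, B.circ a b = a * b := by
  simp only [MulEquiv.ext_iff, lambda_apply, MulAut.one_apply, inv_mul_eq_iff_eq_mul]

theorem lambda_circ_eq_one {a b : G} (ha : B.lambda a = 1) (hb : B.lambda b = 1) :
    B.lambda (B.circ a b) = 1 := by
  rw [lambda_circ, ha, hb, one_mul]

theorem lambda_cinv_eq_one {a : G} (ha : B.lambda a = 1) : B.lambda (B.cinv a) = 1 := by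
  rw [lambda_cinv, ha, inv_one]

theorem lambda_circ_conj_eq_one (g : G) {a : G} (ha : B.lambda a = 1) :
    B.lambda (B.circ (B.circ g a) (B.cinv g)) = 1 := by
  rw [lambda_circ, lambda_circ, lambda_cinv, ha, mul_one, mul_inv_cancel]

/-- A skew left brace is λ-homomorphic if `a ↦ λ_a` is multiplicative for `(G, ·)`, and not only
for `(G, ∘)`. -/
def IsLambdaHomomorphic : Prop :=
  ∀ a b : G, B.lambda (a * b) = B.lambda a * B.lambda b

namespace IsLambdaHomomorphic

variable {B} (hB : B.IsLambdaHomomorphic)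

/-- The map `a ↦ λ_a` of a λ-homomorphic skew left brace, as a homomorphism from `(G, ·)`; its
kernel is the subgroup `G₀`. -/
def lambdaHom : G →* MulAut G :=
  MonoidHom.mk' B.lambda hB

theorem mem_ker_lambdaHom {a : G} : a ∈ hB.lambdaHom.ker ↔ B.lambda a = 1 := Iff.rfl

theorem inv_mul_circ_mem_ker_lambdaHom (a b : G) :
    (a * b)⁻¹ * B.circ a b ∈ hB.lambdaHom.ker := by
  have same_lambda : B.lambda (B.circ a b) = B.lambda (a * b) := by rw [B.lambda_circ, hB]
  exact (MonoidHom.eq_iff hB.lambdaHom).mp same_lambda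

end IsLambdaHomomorphic

end SkewBrace

/-- Let `(G, ·, ∘)` be a λ-homomorphic skew left brace (the
map `λ_a (b) = a⁻¹ * (a ∘ b)` is multiplicative in `a` with respect to `·`),
and let `G₀ = ker λ = {a | ∀ b, a ∘ b = a * b}`.  Then `G₀` is a normal
subgroup of `(G, ·)`, a normal subgroup of `(G, ∘)`, the two operations
coincide on `G₀`, and `(a * b)⁻¹ * (a ∘ b) ∈ G₀` for all `a b : G` (so the
operations induced on the quotient `G/G₀` coincide); hence the brace is
meta-trivial. -/
theorem stmt3 {G : Type*} [Group G] (B : SkewBrace G)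
    (hlam : ∀ a b c : G,
      (a * b)⁻¹ * B.circ (a * b) c = a⁻¹ * B.circ a (b⁻¹ * B.circ b c)) :
    ∃ N : Subgroup G,
      ((N : Set G) = {a : G | ∀ b : G, B.circ a b = a * b}) ∧
      N.Normal ∧
      (∀ a ∈ N, ∀ b ∈ N, B.circ a b ∈ N) ∧
      (∀ a ∈ N, B.cinv a ∈ N) ∧
      (∀ g : G, ∀ a ∈ N, B.circ (B.circ g a) (B.cinv g) ∈ N) ∧
      (∀ a ∈ N, ∀ b : G, B.circ a b = a * b) ∧
      (∀ a b : G, (a * b)⁻¹ * B.circ a b ∈ N) := by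
  have hB : B.IsLambdaHomomorphic := fun a b => MulEquiv.ext (hlam a b)
  have mem_iff {a : G} : a ∈ hB.lambdaHom.ker ↔ ∀ b, B.circ a b = a * b :=
    hB.mem_ker_lambdaHom.trans B.lambda_eq_one_iff
  exact ⟨hB.lambdaHom.ker,
    Set.ext fun _ => mem_iff,
    hB.lambdaHom.normal_ker,
    fun _ ha _ hb => B.lambda_circ_eq_one ha hb,
    fun _ ha => B.lambda_cinv_eq_one ha,
    fun g _ ha => B.lambda_circ_conj_eq_one g ha,
    fun _ ha => mem_iff.mp ha,
    hB.inv_mul_circ_mem_ker_lambdaHom⟩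
end

section
/- Let G be a group generated by a subset X (i.e., the subgroup generated by X is all of G), and let λ : G → Aut(G) be a group homomorphism, writing λ_a for λ(a). If x⁻¹·λ_y(x) ∈ ker λ for all x, y ∈ X, then b⁻¹·λ_a(b) ∈ ker λ for all a, b ∈ G. -/
/-! The condition `b⁻¹ * σ b ∈ ker f` for all `b` says that `f ∘ σ = f`. For a fixed `σ` both sides
are homomorphisms, so it suffices to compare them on generators of the source of `f`; for a fixed
`f` the solutions `σ` form a subgroup, so it suffices to test generators of the acting group. -/

/-- The group of automorphisms `σ` such that `f ∘ σ = f`; for a homomorphism `f` of groups, those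
that map each coset of `ker f` to itself. -/
def autPreserving {G α : Type*} [Mul G] (f : G → α) : Subgroup (MulAut G) where
  carrier := {σ | ∀ b, f (σ b) = f b}
  one_mem' _ := rfl
  mul_mem' {σ τ} hσ hτ b := (hσ (τ b)).trans (hτ b)
  inv_mem' {σ} hσ b := by
    rw [← hσ (σ⁻¹ b), MulAut.apply_inv_self]

section

variable {G M : Type*} [Group G]

theorem mem_autPreserving_iff_forall_mem_ker [MulOneClass M] {f : G →* M} {σ : MulAut G} :
    σ ∈ autPreserving f ↔ ∀ b, b⁻¹ * σ b ∈ f.ker :=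
  forall_congr' fun _ => f.eq_iff

theorem mem_autPreserving_of_forall_mem_generators [Monoid M] {f : G →* M} {σ : MulAut G}
    {X : Set G} (hX : Subgroup.closure X = ⊤) (h : ∀ x ∈ X, f (σ x) = f x) :
    σ ∈ autPreserving f :=
  DFunLike.congr_fun (MonoidHom.eq_of_eqOn_dense hX (f := f.comp σ.toMonoidHom) h)

theorem stmt4_general {A : Type*} [Group A] [Monoid M] {X : Set G} {Y : Set A}
    (hX : Subgroup.closure X = ⊤) (hY : Subgroup.closure Y = ⊤)
    (φ : A →* MulAut G) (f : G →* M)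
    (h : ∀ x ∈ X, ∀ y ∈ Y, x⁻¹ * φ y x ∈ f.ker) (a : A) (b : G) :
    b⁻¹ * φ a b ∈ f.ker := by
  have generators_preserve : Y ⊆ (autPreserving f).comap φ := fun y hy =>
    mem_autPreserving_of_forall_mem_generators hX fun x hx => f.eq_iff.2 (h x hx y hy)
  have all_preserve : ⊤ ≤ (autPreserving f).comap φ :=
    hY ▸ (Subgroup.closure_le _).2 generators_preserve
  exact mem_autPreserving_iff_forall_mem_ker.1 (all_preserve (Subgroup.mem_top a)) b

end

/-- Let `G` be a group generated by a subset `X` and let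
`λ : G →* Aut G` be a group homomorphism.  If `x⁻¹ * λ_y x ∈ ker λ` for all
`x, y ∈ X`, then `b⁻¹ * λ_a b ∈ ker λ` for all `a b : G`. -/
theorem stmt4 {G : Type*} [Group G] (X : Set G) (hX : Subgroup.closure X = ⊤)
    (lam : G →* MulAut G)
    (h : ∀ x ∈ X, ∀ y ∈ X, x⁻¹ * lam y x ∈ lam.ker) :
    ∀ a b : G, b⁻¹ * lam a b ∈ lam.ker :=
  stmt4_general hX hX lam lam h
end

section
/- Let F_n be the free group on free generators x₁, …, xₙ, and let φ₁, …, φₙ be pairwise commuting IA-automorphisms of F_n (i.e., w⁻¹·φᵢ(w) lies in the commutator subgroup F_n' for every w ∈ F_n and every i). Let λ : F_n → Aut(F_n) be the homomorphism determined by λ(xᵢ) = φᵢ for each i. Then b⁻¹·λ_a(b) ∈ ker λ for all a, b ∈ F_n, and consequently H_λ = {(λ_a, a) : a ∈ F_n} is a regular subgroup of Hol F_n. -/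
/-!
Write `γ` for `λ`. Since `γ` is a homomorphism whose values on generators commute, its image is
abelian, so `G' ≤ ker γ`. The IA-automorphisms form a subgroup, so every `γ a` is one, and hence
`b⁻¹ * γ a b ∈ G' ≤ ker γ`. Consequently `γ (a * γ a b) = γ a * γ (γ a b) = γ a * γ b`, which is
exactly what makes the graph `{(γ a, a)}` closed under the multiplication of the holomorph;
regularity asks for the unique `a` such that `(γ a, a)` is inverse to `(γ b, b)`.
-/

section

variable {G : Type*} [Group G]

theorem commutator_le_ker_of_closure_eq_top {N : Type*} [Group N] {S : Set G}
    (hS : Subgroup.closure S = ⊤) (f : G →* N)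
    (hcomm : ∀ s ∈ S, ∀ t ∈ S, Commute (f s) (f t)) : commutator G ≤ f.ker := by
  rw [← Subgroup.map_eq_bot_iff, map_commutator_eq, Subgroup.commutator_self_eq_bot_iff,
    MonoidHom.range_eq_map, ← hS, MonoidHom.map_closure]
  refine Subgroup.isMulCommutative_closure ?_
  rintro _ ⟨s, hs, rfl⟩ _ ⟨t, ht, rfl⟩
  exact hcomm s hs t ht

/-- The subgroup of `MulAut G` formed by the IA-automorphisms of `G`, those inducing the identity
on the abelianization. -/
def iaSubgroup (G : Type*) [Group G] : Subgroup (MulAut G) where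
  carrier := {f | ∀ w, w⁻¹ * f w ∈ commutator G}
  one_mem' w := by simp
  mul_mem' {f g} hf hg w := by
    simpa [mul_assoc] using mul_mem (hg w) (hf (g w))
  inv_mem' {f} hf w := by
    simpa using inv_mem (hf (f⁻¹ w))

theorem mem_iaSubgroup {f : MulAut G} : f ∈ iaSubgroup G ↔ ∀ w, w⁻¹ * f w ∈ commutator G :=
  Iff.rfl

/-- A gamma function on `G`: a map `γ : G → MulAut G` satisfying the functional equation that
makes its graph `{(γ a, a)}` closed under multiplication in the holomorph of `G`. It need not be
a homomorphism. -/
def IsGammaFunction (γ : G → MulAut G) : Prop :=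
  ∀ a b, γ (a * γ a b) = γ a * γ b

theorem isGammaFunction_iff_inv_mul_mem_ker {γ : G →* MulAut G} :
    IsGammaFunction γ ↔ ∀ a b, b⁻¹ * γ a b ∈ γ.ker := by
  refine forall₂_congr fun a b => ?_
  rw [map_mul, mul_right_inj, MonoidHom.mem_ker, map_mul, map_inv, inv_mul_eq_one, eq_comm]

namespace IsGammaFunction

variable {γ : G → MulAut G}

theorem apply_one (hγ : IsGammaFunction γ) : γ 1 = 1 := by
  simpa using hγ 1 1

theorem apply_inv_apply_inv (hγ : IsGammaFunction γ) (a : G) : γ ((γ a)⁻¹ a⁻¹) = (γ a)⁻¹ := by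
  have h : γ a * γ ((γ a)⁻¹ a⁻¹) = 1 := by
    rw [← hγ, MulAut.apply_inv_self, mul_inv_cancel, hγ.apply_one]
  exact eq_inv_of_mul_eq_one_right h

/-- The subgroup `H_γ = {(γ a, a)}` of the holomorph attached to a gamma function `γ`. As `Hol G`
is encoded as a semidirect product with normal factor `G`, its elements are the pairs
`⟨a, γ a⟩`. -/
def graph (hγ : IsGammaFunction γ) : Subgroup (Hol G) where
  carrier := {x | ∃ a, x = ⟨a, γ a⟩}
  one_mem' := ⟨1, by ext1 <;> simp [hγ.apply_one]⟩
  mul_mem' := by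
    rintro _ _ ⟨a, rfl⟩ ⟨b, rfl⟩
    exact ⟨a * γ a b, by ext1 <;> simp [hγ a b]⟩
  inv_mem' := by
    rintro _ ⟨a, rfl⟩
    refine ⟨(γ a)⁻¹ a⁻¹, ?_⟩
    ext1
    · simp
    · exact (hγ.apply_inv_apply_inv a).symm

theorem coe_graph (hγ : IsGammaFunction γ) :
    (hγ.graph : Set (Hol G)) = {x | ∃ a, x = ⟨a, γ a⟩} :=
  rfl

theorem existsUnique_mul_apply_eq_one (hγ : IsGammaFunction γ) (b : G) :
    ∃! a, a * γ a b = 1 := by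
  refine ⟨(γ b)⁻¹ b⁻¹, ?_, fun a (ha : a * γ a b = 1) => ?_⟩
  · change (γ b)⁻¹ b⁻¹ * γ ((γ b)⁻¹ b⁻¹) b = 1
    rw [hγ.apply_inv_apply_inv, ← map_mul, inv_mul_cancel, map_one]
  · have hab : γ a * γ b = 1 := by rw [← hγ, ha, hγ.apply_one]
    rw [← eq_inv_of_mul_eq_one_left hab, map_inv]
    exact eq_inv_of_mul_eq_one_left ha

end IsGammaFunction

theorem inv_mul_apply_mem_ker_of_closure_eq_top {S : Set G} (hS : Subgroup.closure S = ⊤)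
    (γ : G →* MulAut G) (hcomm : ∀ s ∈ S, ∀ t ∈ S, Commute (γ s) (γ t))
    (hIA : ∀ s ∈ S, γ s ∈ iaSubgroup G) (a b : G) : b⁻¹ * γ a b ∈ γ.ker := by
  have hclosure : (⊤ : Subgroup G) ≤ (iaSubgroup G).comap γ :=
    hS ▸ (Subgroup.closure_le _).2 hIA
  exact commutator_le_ker_of_closure_eq_top hS γ hcomm (hclosure (Subgroup.mem_top a) b)

theorem stmt5_general {S : Set G} (hS : Subgroup.closure S = ⊤)
    (γ : G →* MulAut G) (hcomm : ∀ s ∈ S, ∀ t ∈ S, Commute (γ s) (γ t))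
    (hIA : ∀ s ∈ S, γ s ∈ iaSubgroup G) :
    (∀ a b : G, b⁻¹ * γ a b ∈ γ.ker) ∧
    ∃ H : Subgroup (Hol G),
      (H : Set (Hol G)) = {x | ∃ a, x = ⟨a, γ a⟩} ∧ ∀ b, ∃! a, a * γ a b = 1 := by
  have hker : ∀ a b, b⁻¹ * γ a b ∈ γ.ker :=
    inv_mul_apply_mem_ker_of_closure_eq_top hS γ hcomm hIA
  have hγ : IsGammaFunction γ := isGammaFunction_iff_inv_mul_mem_ker.2 hker
  exact ⟨hker, hγ.graph, hγ.coe_graph, hγ.existsUnique_mul_apply_eq_one⟩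

end

/-- Let `F_n` be the free group on `x₁, …, xₙ`, and let
`φ₁, …, φₙ` be pairwise commuting IA-automorphisms of `F_n` (so
`w⁻¹ * φᵢ w` lies in the commutator subgroup for every `w`).  Let
`λ : F_n →* Aut F_n` be the homomorphism with `λ (xᵢ) = φᵢ`.  Then
`b⁻¹ * λ_a b ∈ ker λ` for all `a b`, and `H_λ = {(λ_a, a)}` is a regular
subgroup of `Hol F_n`. -/
theorem stmt5 {n : ℕ} (φ : Fin n → MulAut (FreeGroup (Fin n)))
    (hcomm : ∀ i j : Fin n, φ i * φ j = φ j * φ i)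
    (hIA : ∀ i : Fin n, ∀ w : FreeGroup (Fin n),
      w⁻¹ * φ i w ∈ commutator (FreeGroup (Fin n))) :
    (∀ a b : FreeGroup (Fin n),
      b⁻¹ * (FreeGroup.lift φ) a b ∈ (FreeGroup.lift φ).ker) ∧
    ∃ H : Subgroup (Hol (FreeGroup (Fin n))),
      ((H : Set (Hol (FreeGroup (Fin n)))) =
        {x : Hol (FreeGroup (Fin n)) |
          ∃ a : FreeGroup (Fin n), x = ⟨a, FreeGroup.lift φ a⟩}) ∧
      ∀ b : FreeGroup (Fin n), ∃! a : FreeGroup (Fin n),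
        a * (FreeGroup.lift φ) a b = 1 :=
  stmt5_general (FreeGroup.closure_range_of _) (FreeGroup.lift φ)
    (by simpa [commute_iff_eq] using hcomm) (by simpa [mem_iaSubgroup] using hIA)
end

section
/- Let F₂ be the free group on free generators x and y, let θ be the automorphism of F₂ interchanging x and y, and let H₀ be the kernel of the homomorphism F₂ → ℤ/2ℤ sending both x and y to the generator (so H₀ consists of words of even length). Define a∘b = a·b if a ∈ H₀ and a∘b = a·θ(b) if a ∉ H₀. Then (F₂, ·, ∘) is a skew left brace and the group (F₂, ∘) is a free group of rank 2. -/
/-!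
A homomorphism `f : G → A` invariant under an action of `A` on `G` turns `a ∘ b = a * (f a • b)`
into a skew brace. On a free group whose generators are permuted by a commutative `A`, let `t` be
the crossed homomorphism `t (a * b) = t a * (f a • t b)` fixing the generators, and `t'` the one for
the inverse homomorphism `f⁻¹`. Since `t'` commutes with the action and `f (t a) = f a`, the two
twists cancel: `t' (t a)` is an ordinary homomorphism fixing the generators, that is, the identity.
Hence `t'` is bijective, and it carries `∘` to `*`.
-/

section Brace

variable {G A : Type*} [Group G] [Group A]

/-- The skew brace `a ∘ b = a * (f a • b)` attached to an action `φ` of `A` on `G` by automorphisms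
and a homomorphism `f : G → A` that is invariant under `φ`. -/
def SkewBrace.ofInvariantHom (φ : A →* MulAut G) (f : G →* A) (hf : ∀ x a, f (φ x a) = f a) :
    SkewBrace G where
  circ a b := a * φ (f a) b
  cinv a := φ (f a)⁻¹ a⁻¹
  circ_assoc a b c := by simp only [map_mul, hf, MulAut.mul_apply, mul_assoc]
  one_circ a := by simp
  circ_one a := by simp
  cinv_circ a := by rw [hf, map_inv f, ← map_mul, inv_mul_cancel, map_one]
  circ_cinv a := by rw [← MulAut.mul_apply, ← map_mul, mul_inv_cancel, map_one, MulAut.one_apply,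
    mul_inv_cancel]
  compat a b c := by simp only [map_mul, mul_assoc, inv_mul_cancel_left]

theorem SkewBrace.ofInvariantHom_circ {φ : A →* MulAut G} {f : G →* A}
    (hf : ∀ x a, f (φ x a) = f a) (a b : G) :
    (SkewBrace.ofInvariantHom φ f hf).circ a b = a * φ (f a) b :=
  rfl

end Brace

theorem inv_map_action {G A : Type*} [Group G] [CommGroup A] {φ : A →* MulAut G} {f : G →* A}
    (hf : ∀ x a, f (φ x a) = f a) (x : A) (a : G) : f⁻¹ (φ x a) = f⁻¹ a := by
  rw [MonoidHom.inv_apply, MonoidHom.inv_apply, hf]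

section CrossedHom

variable {G N A : Type*} [Group G] [Group N] [Group A]

/-- Crossed homomorphisms (nonabelian 1-cocycles) `G → N`, where `G` acts on `N` through
`f : G → A` and the action `φ` of `A`. -/
def IsCrossedHom (φ : A →* MulAut N) (f : G →* A) (c : G → N) : Prop :=
  ∀ a b, c (a * b) = c a * φ (f a) (c b)

/-- The homomorphism `a ↦ (c a, f a)` to the semidirect product given by a crossed homomorphism. -/
def IsCrossedHom.toSemidirectProduct {φ : A →* MulAut N} {f : G →* A} {c : G → N}
    (hc : IsCrossedHom φ f c) : G →* N ⋊[φ] A :=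
  MonoidHom.mk' (fun a => ⟨c a, f a⟩) fun a b =>
    SemidirectProduct.ext (hc a b) (map_mul f a b)

theorem IsCrossedHom.ext_of {α : Type*} {φ : A →* MulAut N} {f : FreeGroup α →* A}
    {c d : FreeGroup α → N} (hc : IsCrossedHom φ f c) (hd : IsCrossedHom φ f d)
    (h : ∀ i, c (FreeGroup.of i) = d (FreeGroup.of i)) : c = d := by
  have hom_eq : hc.toSemidirectProduct = hd.toSemidirectProduct :=
    FreeGroup.ext_hom _ _ fun i => SemidirectProduct.ext (h i) rfl
  exact funext fun a => congrArg SemidirectProduct.left (DFunLike.congr_fun hom_eq a)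

end CrossedHom

section Twist

variable {α A : Type*}

/-- The crossed homomorphism from a free group to itself that fixes the generators. -/
def twist [Group A] (φ : A →* MulAut (FreeGroup α)) (f : FreeGroup α →* A) (a : FreeGroup α) :
    FreeGroup α :=
  (FreeGroup.lift (fun i => (⟨FreeGroup.of i, f (FreeGroup.of i)⟩ : FreeGroup α ⋊[φ] A)) a).left

section Group

variable [Group A] (φ : A →* MulAut (FreeGroup α)) (f : FreeGroup α →* A)

@[simp]
theorem twist_of (i : α) : twist φ f (FreeGroup.of i) = FreeGroup.of i := by
  simp [twist]

theorem isCrossedHom_twist : IsCrossedHom φ f (twist φ f) := by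
  have right_eq : SemidirectProduct.rightHom.comp (FreeGroup.lift fun i =>
      (⟨FreeGroup.of i, f (FreeGroup.of i)⟩ : FreeGroup α ⋊[φ] A)) = f :=
    FreeGroup.ext_hom _ _ fun i => by simp
  intro a b
  simp only [twist, map_mul, SemidirectProduct.mul_left, ← DFunLike.congr_fun right_eq a,
    MonoidHom.comp_apply, SemidirectProduct.rightHom_eq_right]

variable {φ f}

theorem map_twist (hf : ∀ x a, f (φ x a) = f a) (a : FreeGroup α) : f (twist φ f a) = f a := by
  have map_mul_twist (a b) : f (twist φ f (a * b)) = f (twist φ f a) * f (twist φ f b) := by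
    rw [isCrossedHom_twist, map_mul, hf]
  have hom_eq : MonoidHom.mk' (fun a => f (twist φ f a)) map_mul_twist = f :=
    FreeGroup.ext_hom _ _ fun i => by simp
  exact DFunLike.congr_fun hom_eq a

end Group

section CommGroup

variable [CommGroup A] {φ : A →* MulAut (FreeGroup α)} {f : FreeGroup α →* A}

theorem twist_map_action (hf : ∀ x a, f (φ x a) = f a)
    (hφ : ∀ x i, φ x (FreeGroup.of i) ∈ Set.range FreeGroup.of) (x : A) (a : FreeGroup α) :
    twist φ f (φ x a) = φ x (twist φ f a) := by
  have commute (y b) : φ x⁻¹ (φ y b) = φ y (φ x⁻¹ b) := by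
    rw [← MulAut.mul_apply, ← map_mul, mul_comm, map_mul, MulAut.mul_apply]
  have crossed : IsCrossedHom φ f fun a => φ x⁻¹ (twist φ f (φ x a)) := fun a b => by
    beta_reduce
    rw [map_mul (φ x), isCrossedHom_twist, hf, map_mul, commute]
  have conj_eq : (fun a => φ x⁻¹ (twist φ f (φ x a))) = twist φ f :=
    crossed.ext_of (isCrossedHom_twist φ f) fun i => by
      obtain ⟨j, hj⟩ := hφ x i
      rw [← hj, twist_of, twist_of, hj, map_inv, MulAut.inv_apply_self]
  rw [← congrFun conj_eq a, map_inv, MulAut.apply_inv_self]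

theorem twist_inv_twist (hf : ∀ x a, f (φ x a) = f a)
    (hφ : ∀ x i, φ x (FreeGroup.of i) ∈ Set.range FreeGroup.of) (a : FreeGroup α) :
    twist φ f⁻¹ (twist φ f a) = a := by
  have mul_twist (a b) : twist φ f⁻¹ (twist φ f (a * b)) =
      twist φ f⁻¹ (twist φ f a) * twist φ f⁻¹ (twist φ f b) := by
    rw [isCrossedHom_twist φ f, isCrossedHom_twist φ f⁻¹, twist_map_action (inv_map_action hf) hφ,
      MonoidHom.inv_apply, map_twist hf, map_inv, MulAut.inv_apply_self]
  have hom_eq : MonoidHom.mk' (fun a => twist φ f⁻¹ (twist φ f a)) mul_twist = MonoidHom.id _ :=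
    FreeGroup.ext_hom _ _ fun i => by simp
  exact DFunLike.congr_fun hom_eq a

/-- The twist by `f` as a permutation of the free group, with inverse the twist by `f⁻¹`. -/
def twistEquiv (hf : ∀ x a, f (φ x a) = f a)
    (hφ : ∀ x i, φ x (FreeGroup.of i) ∈ Set.range FreeGroup.of) : Equiv.Perm (FreeGroup α) where
  toFun := twist φ f
  invFun := twist φ f⁻¹
  left_inv := twist_inv_twist hf hφ
  right_inv a := by simpa only [inv_inv] using twist_inv_twist (inv_map_action hf) hφ a

theorem twistEquiv_symm_circ (hf : ∀ x a, f (φ x a) = f a)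
    (hφ : ∀ x i, φ x (FreeGroup.of i) ∈ Set.range FreeGroup.of) (a b : FreeGroup α) :
    (twistEquiv hf hφ).symm ((SkewBrace.ofInvariantHom φ f hf).circ a b) =
      (twistEquiv hf hφ).symm a * (twistEquiv hf hφ).symm b := by
  change twist φ f⁻¹ (a * φ (f a) b) = twist φ f⁻¹ a * twist φ f⁻¹ b
  rw [isCrossedHom_twist, twist_map_action (inv_map_action hf) hφ, MonoidHom.inv_apply, map_inv,
    MulAut.inv_apply_self]

end CommGroup

end Twist

section Involution

theorem exists_monoidHom_ofAdd_one {G : Type*} [Group G] {n : ℕ} {g : G} (hg : g ^ n = 1) :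
    ∃ φ : Multiplicative (ZMod n) →* G, φ (Multiplicative.ofAdd 1) = g := by
  let powers : ℤ →+ Additive G := zmultiplesHom _ (Additive.ofMul g)
  have powers_n : powers n = 0 := by simp [powers, ← ofMul_pow, hg]
  have lift_one : ZMod.lift n ⟨powers, powers_n⟩ 1 = Additive.ofMul g := by
    simpa [powers] using ZMod.lift_coe n ⟨powers, powers_n⟩ 1
  exact ⟨AddMonoidHom.toMultiplicativeLeft (ZMod.lift n ⟨powers, powers_n⟩), lift_one⟩

theorem eq_one_or_eq_ofAdd_one (x : Multiplicative (ZMod 2)) :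
    x = 1 ∨ x = Multiplicative.ofAdd 1 := by
  revert x
  decide

variable {α : Type*} {θ : MulAut (FreeGroup α)} {σ : α → α}

theorem sq_eq_one_of_involutive (hσ : Function.Involutive σ)
    (hθ : ∀ i, θ (FreeGroup.of i) = FreeGroup.of (σ i)) : θ ^ 2 = 1 := by
  have hom_eq : (θ ^ 2).toMonoidHom = MonoidHom.id _ :=
    FreeGroup.ext_hom _ _ fun i => by simp [pow_two, hθ, hσ i]
  exact MulEquiv.toMonoidHom_injective hom_eq

theorem map_apply_eq_of_forall_of {A : Type*} [Group A] {f : FreeGroup α →* A}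
    (hθ : ∀ i, θ (FreeGroup.of i) = FreeGroup.of (σ i))
    (hf : ∀ i, f (FreeGroup.of (σ i)) = f (FreeGroup.of i)) (a : FreeGroup α) : f (θ a) = f a := by
  have hom_eq : f.comp θ.toMonoidHom = f :=
    FreeGroup.ext_hom _ _ fun i => by simp [hθ, hf]
  exact DFunLike.congr_fun hom_eq a

theorem stmt8_general (hσ : Function.Involutive σ)
    (hθ : ∀ i, θ (FreeGroup.of i) = FreeGroup.of (σ i))
    (f : FreeGroup α →* Multiplicative (ZMod 2))
    (hf : ∀ i, f (FreeGroup.of (σ i)) = f (FreeGroup.of i)) :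
    ∃ S : SkewBrace (FreeGroup α),
      (∀ a ∈ f.ker, ∀ b, S.circ a b = a * b) ∧
      (∀ a ∉ f.ker, ∀ b, S.circ a b = a * θ b) ∧
      ∃ e : FreeGroup α ≃ FreeGroup α, ∀ a b, e (S.circ a b) = e a * e b := by
  obtain ⟨φ, hφ⟩ := exists_monoidHom_ofAdd_one (sq_eq_one_of_involutive hσ hθ)
  have f_invariant (x a) : f (φ x a) = f a := by
    obtain rfl | rfl := eq_one_or_eq_ofAdd_one x
    · rw [map_one, MulAut.one_apply]
    · rw [hφ, map_apply_eq_of_forall_of hθ hf]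
  have φ_permutes (x i) : φ x (FreeGroup.of i) ∈ Set.range FreeGroup.of := by
    obtain rfl | rfl := eq_one_or_eq_ofAdd_one x
    · exact ⟨i, by rw [map_one, MulAut.one_apply]⟩
    · exact ⟨σ i, by rw [hφ, hθ]⟩
  refine ⟨.ofInvariantHom φ f f_invariant, fun a ha b => ?_, fun a ha b => ?_,
    (twistEquiv f_invariant φ_permutes).symm, twistEquiv_symm_circ f_invariant φ_permutes⟩
  · rw [SkewBrace.ofInvariantHom_circ, f.mem_ker.mp ha, map_one, MulAut.one_apply]
  · rw [SkewBrace.ofInvariantHom_circ, (eq_one_or_eq_ofAdd_one (f a)).resolve_left ha, hφ]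

end Involution

/-- Let `F₂` be the free group on `x, y`, let `θ` be the
automorphism interchanging `x` and `y`, and let `H₀` be the kernel of the
homomorphism `F₂ → ℤ/2ℤ` sending both generators to the generator of `ℤ/2ℤ`.
Define `a ∘ b = a * b` for `a ∈ H₀` and `a ∘ b = a * θ b` for `a ∉ H₀`.
Then `(F₂, ·, ∘)` is a skew left brace and `(F₂, ∘)` is a free group of
rank 2. -/
theorem stmt8 (θ : MulAut (FreeGroup (Fin 2)))
    (hθx : θ (FreeGroup.of 0) = FreeGroup.of 1)
    (hθy : θ (FreeGroup.of 1) = FreeGroup.of 0)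
    (f : FreeGroup (Fin 2) →* Multiplicative (ZMod 2))
    (hfx : f (FreeGroup.of 0) = Multiplicative.ofAdd 1)
    (hfy : f (FreeGroup.of 1) = Multiplicative.ofAdd 1) :
    ∃ S : SkewBrace (FreeGroup (Fin 2)),
      (∀ a ∈ f.ker, ∀ b : FreeGroup (Fin 2), S.circ a b = a * b) ∧
      (∀ a ∉ f.ker, ∀ b : FreeGroup (Fin 2), S.circ a b = a * θ b) ∧
      ∃ e : FreeGroup (Fin 2) ≃ FreeGroup (Fin 2),
        ∀ a b : FreeGroup (Fin 2), e (S.circ a b) = e a * e b :=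
  stmt8_general Fin.rev_involutive (Fin.forall_fin_two.2 ⟨hθx, hθy⟩) f
    (Fin.forall_fin_two.2 ⟨hfy.trans hfx.symm, hfx.trans hfy.symm⟩)
end

section
/- Let F₂ be the free group on free generators x and y, let θ be the automorphism of F₂ with θ(x) = x⁻¹ and θ(y) = y⁻¹, and let H₀ be the kernel of the homomorphism F₂ → ℤ/2ℤ sending both x and y to the generator. Define a∘b = a·b if a ∈ H₀ and a∘b = a·θ(b) if a ∉ H₀. Then (F₂, ·, ∘) is a skew left brace and the group (F₂, ∘) is isomorphic to the group presented by ⟨p, q, r, s | s² = 1, s p s = p⁻¹, s q s = q⁻¹, s r s = p r⁻¹ p⁻¹⟩, i.e., to a semidirect product F₃ ⋊ ℤ/2ℤ. -/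
/-- The relations of the presentation
`⟨p, q, r, s ∣ s² = 1, s p s = p⁻¹, s q s = q⁻¹, s r s = p r⁻¹ p⁻¹⟩`,
with generators indexed `p = 0`, `q = 1`, `r = 2`, `s = 3`; this group is a
semidirect product `F₃ ⋊ ℤ/2ℤ`. -/
def relsF3Z2 : Set (FreeGroup (Fin 4)) :=
  { FreeGroup.of 3 * FreeGroup.of 3,
    FreeGroup.of 3 * FreeGroup.of 0 * FreeGroup.of 3 * FreeGroup.of 0,
    FreeGroup.of 3 * FreeGroup.of 1 * FreeGroup.of 3 * FreeGroup.of 1,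
    FreeGroup.of 3 * FreeGroup.of 2 * FreeGroup.of 3 *
      FreeGroup.of 0 * FreeGroup.of 2 * (FreeGroup.of 0)⁻¹ }

namespace SkewBrace

variable {G : Type*} [Group G] (S : SkewBrace G)

/-- The second group `(G, ∘)` of a skew brace, on a synonym of `G` so that both multiplications can
be used as `*`. -/
def Circ {G : Type*} [Group G] (_S : SkewBrace G) : Type _ := G

/-- The identity map from `G` to its synonym `S.Circ`; it is not a homomorphism. -/
def toCirc : G ≃ S.Circ := Equiv.refl G

instance : Group S.Circ where
  mul a b := S.toCirc (S.circ (S.toCirc.symm a) (S.toCirc.symm b))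
  one := S.toCirc 1
  inv a := S.toCirc (S.cinv (S.toCirc.symm a))
  mul_assoc := S.circ_assoc
  one_mul := S.one_circ
  mul_one := S.circ_one
  inv_mul_cancel := S.cinv_circ

end SkewBrace

/-- An action of a group `A` on a group `G` by automorphisms that preserve an `A`-valued degree.
These are the data that twist the multiplication of `G` into `a ∘ b = a * act (deg a) b`. -/
structure GradedAction (A G : Type*) [Group A] [Group G] where
  act : A →* MulAut G
  deg : G →* A
  deg_act : ∀ t g, deg (act t g) = deg g

namespace GradedAction

section Group

variable {A G : Type*} [Group A] [Group G] (D : GradedAction A G)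

/-- The skew brace on `G` with `a ∘ b = a * act (deg a) b`. -/
def brace : SkewBrace G where
  circ a b := a * D.act (D.deg a) b
  cinv a := D.act (D.deg a)⁻¹ a⁻¹
  circ_assoc a b c := by simp [D.deg_act, mul_assoc]
  one_circ a := by simp
  circ_one a := by simp
  cinv_circ a := by
    rw [D.deg_act, map_inv D.deg, ← map_mul, inv_mul_cancel, map_one]
  circ_cinv a := by simp
  compat a b c := by simp [mul_assoc]

/-- The group `(G, ∘)` with `a ∘ b = a * act (deg a) b`. -/
abbrev Circ : Type _ := D.brace.Circ

/-- The identity map from `G` to its synonym `D.Circ`; it is not a homomorphism. -/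
abbrev toCirc : G ≃ D.Circ := D.brace.toCirc

lemma brace_circ (a b : G) : D.brace.circ a b = a * D.act (D.deg a) b := rfl

@[simp]
lemma toCirc_symm_one : D.toCirc.symm 1 = 1 := rfl

@[simp]
lemma toCirc_symm_mul (a b : D.Circ) :
    D.toCirc.symm (a * b) =
      D.toCirc.symm a * D.act (D.deg (D.toCirc.symm a)) (D.toCirc.symm b) := rfl

@[simp]
lemma toCirc_symm_inv (a : D.Circ) :
    D.toCirc.symm a⁻¹ = D.act (D.deg (D.toCirc.symm a))⁻¹ (D.toCirc.symm a)⁻¹ := rfl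

/-- The degree as a homomorphism on the twisted group. -/
def circDeg : D.Circ →* A :=
  MonoidHom.mk' (fun a => D.deg (D.toCirc.symm a)) fun a b => by simp [D.deg_act]

@[simp]
lemma circDeg_apply (a : D.Circ) : D.circDeg a = D.deg (D.toCirc.symm a) := rfl

end Group

section CommGroup

variable {A G H : Type*} [CommGroup A] [Group G] [Group H]

lemma act_comm (D : GradedAction A G) (s t : A) (a : G) :
    D.act s (D.act t a) = D.act t (D.act s a) := by
  rw [← MulAut.mul_apply, ← MulAut.mul_apply, ← map_mul, ← map_mul, mul_comm]

/-- The action on the twisted group; its elements are homomorphisms for `∘` because `A` is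
commutative. -/
def circAct (D : GradedAction A G) (t : A) : D.Circ →* D.Circ :=
  MonoidHom.mk' (fun a => D.toCirc (D.act t (D.toCirc.symm a))) fun a b =>
    D.toCirc.symm.injective <| by
      simp [D.deg_act, D.act_comm t]

@[simp]
lemma toCirc_symm_circAct (D : GradedAction A G) (t : A) (a : D.Circ) :
    D.toCirc.symm (D.circAct t a) = D.act t (D.toCirc.symm a) := rfl

/-- A homomorphism from `G` to the twist of `H` that preserves degrees and carries the action on
`G` to the inverse of the action on `H`. -/
structure TwistedHom (D : GradedAction A G) (E : GradedAction A H) where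
  hom : G →* E.Circ
  circDeg_comp : E.circDeg.comp hom = D.deg
  comp_act : ∀ t, hom.comp (D.act t).toMonoidHom = (E.circAct t⁻¹).comp hom

namespace TwistedHom

variable {D : GradedAction A G} {E : GradedAction A H}

lemma deg_toCirc_symm_hom (ψ : TwistedHom D E) (a : G) :
    E.deg (E.toCirc.symm (ψ.hom a)) = D.deg a :=
  DFunLike.congr_fun ψ.circDeg_comp a

lemma hom_act (ψ : TwistedHom D E) (t : A) (a : G) :
    ψ.hom (D.act t a) = E.circAct t⁻¹ (ψ.hom a) :=
  DFunLike.congr_fun (ψ.comp_act t) a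

/-- Twisting by an action and then by its inverse restores the original multiplication, so a
homomorphism into a twist is, as a map, also a homomorphism out of a twist. -/
def untwist (ψ : TwistedHom D E) : D.Circ →* H :=
  MonoidHom.mk' (fun a => E.toCirc.symm (ψ.hom (D.toCirc.symm a))) fun a b => by
    simp [ψ.hom_act, ψ.deg_toCirc_symm_hom]

lemma untwist_toCirc (ψ : TwistedHom D E) (a : G) :
    ψ.untwist (D.toCirc a) = E.toCirc.symm (ψ.hom a) := rfl

/-- Both hypotheses compare homomorphisms for the untwisted multiplications, hence can be checked
on generators of `G` and of `H`. -/
def circMulEquiv (ψ : TwistedHom D E) (φ : TwistedHom E D)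
    (hφψ : φ.untwist.comp ψ.hom = MonoidHom.id G) (hψφ : ψ.untwist.comp φ.hom = MonoidHom.id H) :
    D.Circ ≃* H :=
  MonoidHom.toMulEquiv ψ.untwist φ.hom
    (MonoidHom.ext fun a => D.toCirc.symm.injective (DFunLike.congr_fun hφψ (D.toCirc.symm a)))
    hψφ

end TwistedHom

end CommGroup

end GradedAction

section Involution

open Multiplicative

variable {G H : Type*} [Group G] [Group H]

lemma eq_one_or_eq_ofAdd_one_s9 (t : Multiplicative (ZMod 2)) : t = 1 ∨ t = ofAdd 1 := by
  decide +revert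

lemma ofAdd_one_mul_self : (ofAdd 1 * ofAdd 1 : Multiplicative (ZMod 2)) = 1 := by decide

lemma inv_ofAdd_one : (ofAdd 1 : Multiplicative (ZMod 2))⁻¹ = ofAdd 1 := by decide

/-- The action of `ℤ/2` in which the generator acts by a given involution. -/
def involutionAct (θ : MulAut G) (hθ : θ * θ = 1) : Multiplicative (ZMod 2) →* MulAut G :=
  MonoidHom.mk' (fun t => θ ^ t.toAdd.val) fun s t => by
    rcases eq_one_or_eq_ofAdd_one_s9 s with rfl | rfl <;>
      rcases eq_one_or_eq_ofAdd_one_s9 t with rfl | rfl <;>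
      simp [ofAdd_one_mul_self, ZMod.val_one, hθ]

lemma involutionAct_ofAdd_one (θ : MulAut G) (hθ : θ * θ = 1) :
    involutionAct θ hθ (ofAdd 1) = θ := pow_one θ

namespace GradedAction

/-- The graded action of `ℤ/2` given by an involution `θ` that preserves a degree. The involution is
given as an endomorphism so that its properties can be checked on generators. -/
def ofInvolution (θ : G →* G) (hθ : θ.comp θ = MonoidHom.id G) (f : G →* Multiplicative (ZMod 2))
    (hf : f.comp θ = f) : GradedAction (Multiplicative (ZMod 2)) G where
  act := involutionAct (MonoidHom.toMulEquiv θ θ hθ hθ)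
    (MulEquiv.ext fun a => DFunLike.congr_fun hθ a)
  deg := f
  deg_act t a := by
    rcases eq_one_or_eq_ofAdd_one_s9 t with rfl | rfl
    · simp
    · rw [involutionAct_ofAdd_one]
      exact DFunLike.congr_fun hf a

lemma ofInvolution_act_ofAdd_one (θ : G →* G) (hθ : θ.comp θ = MonoidHom.id G)
    (f : G →* Multiplicative (ZMod 2)) (hf : f.comp θ = f) (a : G) :
    (ofInvolution θ hθ f hf).act (ofAdd 1) a = θ a := by
  simp only [ofInvolution, involutionAct_ofAdd_one, MonoidHom.toMulEquiv_apply]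

variable {D : GradedAction (Multiplicative (ZMod 2)) G}
  {E : GradedAction (Multiplicative (ZMod 2)) H}

/-- Over `ℤ/2`, equivariance need only be checked for the generator, which is its own inverse. -/
def TwistedHom.ofCompActOfAddOne (ψ : G →* E.Circ) (hdeg : E.circDeg.comp ψ = D.deg)
    (hact : ψ.comp (D.act (ofAdd 1)).toMonoidHom = (E.circAct (ofAdd 1)).comp ψ) :
    TwistedHom D E where
  hom := ψ
  circDeg_comp := hdeg
  comp_act t := by
    rcases eq_one_or_eq_ofAdd_one_s9 t with rfl | rfl
    · ext a
      exact E.toCirc.symm.injective (by simp)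
    · exact hact

end GradedAction

end Involution

section UniversalCoxeter

open Multiplicative GradedAction

variable {κ ι K : Type*} [DecidableEq κ] [DecidableEq ι] [Group K]

/-- The Coxeter matrix whose off-diagonal entries are `0`, which encodes `∞`. -/
def universalCoxeterMatrix (κ : Type*) [DecidableEq κ] : CoxeterMatrix κ where
  M := 1
  isSymm := Matrix.isSymm_one
  diagonal := Matrix.one_apply_eq
  off_diagonal i j h := by simp [Matrix.one_apply_ne h]

/-- The free product of copies of `ℤ/2` indexed by `κ`. -/
abbrev UniversalCoxeterGroup (κ : Type*) [DecidableEq κ] : Type _ :=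
  (universalCoxeterMatrix κ).Group

namespace UniversalCoxeterGroup

/-- The generating involution with index `k`. -/
abbrev of (k : κ) : UniversalCoxeterGroup κ := (universalCoxeterMatrix κ).simple k

lemma of_mul_self (k : κ) : of k * of k = 1 :=
  (universalCoxeterMatrix κ).toCoxeterSystem.simple_mul_simple_self k

lemma inv_of (k : κ) : (of k)⁻¹ = of k :=
  (universalCoxeterMatrix κ).toCoxeterSystem.inv_simple k

lemma hom_ext {φ ψ : UniversalCoxeterGroup κ →* K} (h : ∀ k, φ (of k) = ψ (of k)) : φ = ψ :=
  (universalCoxeterMatrix κ).toCoxeterSystem.ext_simple h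

lemma isLiftable {g : κ → K} (hg : ∀ k, g k * g k = 1) :
    (universalCoxeterMatrix κ).IsLiftable g := by
  intro i j
  rcases eq_or_ne i j with rfl | hij
  · simp [hg]
  · simp [universalCoxeterMatrix, Matrix.one_apply_ne hij]

/-- The homomorphism determined by a family of elements that square to `1`. -/
def lift (g : κ → K) (hg : ∀ k, g k * g k = 1) : UniversalCoxeterGroup κ →* K :=
  (universalCoxeterMatrix κ).toCoxeterSystem.lift ⟨g, isLiftable hg⟩

@[simp]
lemma lift_of (g : κ → K) (hg : ∀ k, g k * g k = 1) (k : κ) : lift g hg (of k) = g k :=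
  (universalCoxeterMatrix κ).toCoxeterSystem.lift_apply_simple (isLiftable hg) k

/-- The parity of the length of a word in the generating involutions. -/
def parity (κ : Type*) [DecidableEq κ] : UniversalCoxeterGroup κ →* Multiplicative (ZMod 2) :=
  lift (fun _ => ofAdd 1) fun _ => ofAdd_one_mul_self

/-- The involution that exchanges the two copies of `ι` in the index set. -/
def swap (ι : Type*) [DecidableEq ι] :
    UniversalCoxeterGroup (ι ⊕ ι) →* UniversalCoxeterGroup (ι ⊕ ι) :=
  lift (fun k => of k.swap) fun k => of_mul_self k.swap

/-- The graded action whose twist is the free group on `ι`. -/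
def swapAction (ι : Type*) [DecidableEq ι] :
    GradedAction (Multiplicative (ZMod 2)) (UniversalCoxeterGroup (ι ⊕ ι)) :=
  ofInvolution (swap ι) (hom_ext fun k => by simp [swap]) (parity (ι ⊕ ι))
    (hom_ext fun k => by simp [swap, parity])

@[simp]
lemma swapAction_act_of (k : ι ⊕ ι) : (swapAction ι).act (ofAdd 1) (of k) = of k.swap :=
  (ofInvolution_act_ofAdd_one _ _ _ _ _).trans (lift_of _ _ k)

@[simp]
lemma swapAction_deg_of (k : ι ⊕ ι) : (swapAction ι).deg (of k) = ofAdd 1 :=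
  lift_of _ (fun _ => ofAdd_one_mul_self) k

lemma inv_toCirc_of (k : ι ⊕ ι) :
    ((swapAction ι).toCirc (of k))⁻¹ = (swapAction ι).toCirc (of k.swap) :=
  (swapAction ι).toCirc.symm.injective <| by
    rw [toCirc_symm_inv, Equiv.symm_apply_apply, swapAction_deg_of, inv_ofAdd_one, inv_of,
      swapAction_act_of, Equiv.symm_apply_apply]

end UniversalCoxeterGroup

end UniversalCoxeter

section FreeGroup

open Multiplicative GradedAction UniversalCoxeterGroup

variable {ι : Type*}

/-- The endomorphism of a free group that inverts each free generator. -/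
def invertGenerators (ι : Type*) : FreeGroup ι →* FreeGroup ι :=
  FreeGroup.lift fun i => (FreeGroup.of i)⁻¹

/-- The parity of the length of a word in the free generators. -/
def wordParity (ι : Type*) : FreeGroup ι →* Multiplicative (ZMod 2) :=
  FreeGroup.lift fun _ => ofAdd 1

/-- The graded action that defines the skew brace on the free group. -/
def inversionAction (ι : Type*) : GradedAction (Multiplicative (ZMod 2)) (FreeGroup ι) :=
  ofInvolution (invertGenerators ι) (FreeGroup.ext_hom _ _ fun i => by simp [invertGenerators])
    (wordParity ι)
    (FreeGroup.ext_hom _ _ fun i => by simp [invertGenerators, wordParity, inv_ofAdd_one])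

/-- The letter `x i` for `Sum.inl i` and the letter `(x i)⁻¹` for `Sum.inr i`. -/
def letter : ι ⊕ ι → FreeGroup ι := Sum.elim FreeGroup.of fun i => (FreeGroup.of i)⁻¹

lemma freeGroup_hom_ext_letter {K : Type*} [Group K] {φ ψ : FreeGroup ι →* K}
    (h : ∀ k, φ (letter k) = ψ (letter k)) : φ = ψ :=
  FreeGroup.ext_hom _ _ fun i => h (.inl i)

lemma letter_mul_letter_swap (k : ι ⊕ ι) : letter k * letter k.swap = 1 := by
  cases k <;> simp [letter]

lemma inversionAction_act_letter (k : ι ⊕ ι) :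
    (inversionAction ι).act (ofAdd 1) (letter k) = letter k.swap := by
  rw [inversionAction, ofInvolution_act_ofAdd_one]
  cases k <;> simp [letter, invertGenerators]

lemma inversionAction_deg_letter (k : ι ⊕ ι) : (inversionAction ι).deg (letter k) = ofAdd 1 := by
  cases k <;> simp [letter, inversionAction, ofInvolution, wordParity, inv_ofAdd_one]

lemma toCirc_letter_mul_self (k : ι ⊕ ι) :
    (inversionAction ι).toCirc (letter k) * (inversionAction ι).toCirc (letter k) = 1 :=
  (inversionAction ι).toCirc.symm.injective <| by
    simp [inversionAction_deg_letter, inversionAction_act_letter, letter_mul_letter_swap]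

variable [DecidableEq ι]

/-- The twisted homomorphism that sends the generating involutions to the letters. -/
def coxeterToFree (ι : Type*) [DecidableEq ι] : TwistedHom (swapAction ι) (inversionAction ι) :=
  .ofCompActOfAddOne
    (lift (fun k => (inversionAction ι).toCirc (letter k)) toCirc_letter_mul_self)
    (hom_ext fun k => by simp [inversionAction_deg_letter])
    (hom_ext fun k => (inversionAction ι).toCirc.symm.injective <| by
      simp [inversionAction_act_letter])

lemma coxeterToFree_of (k : ι ⊕ ι) :
    (coxeterToFree ι).hom (of k) = (inversionAction ι).toCirc (letter k) :=
  lift_of _ toCirc_letter_mul_self k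

/-- The underlying homomorphism of `freeToCoxeter`. -/
def freeToCoxeterHom (ι : Type*) [DecidableEq ι] : FreeGroup ι →* (swapAction ι).Circ :=
  FreeGroup.lift fun i => (swapAction ι).toCirc (of (.inl i))

lemma freeToCoxeterHom_letter (k : ι ⊕ ι) :
    freeToCoxeterHom ι (letter k) = (swapAction ι).toCirc (of k) := by
  cases k <;> simp [freeToCoxeterHom, letter, inv_toCirc_of]

/-- The twisted homomorphism that sends the letters to the generating involutions. -/
def freeToCoxeter (ι : Type*) [DecidableEq ι] : TwistedHom (inversionAction ι) (swapAction ι) :=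
  .ofCompActOfAddOne (freeToCoxeterHom ι)
    (freeGroup_hom_ext_letter fun k => by
      simp [freeToCoxeterHom_letter, inversionAction_deg_letter])
    (freeGroup_hom_ext_letter fun k => (swapAction ι).toCirc.symm.injective <| by
      simp [freeToCoxeterHom_letter, inversionAction_act_letter])

lemma freeToCoxeter_letter (k : ι ⊕ ι) :
    (freeToCoxeter ι).hom (letter k) = (swapAction ι).toCirc (of k) := freeToCoxeterHom_letter k

/-- The isomorphism of `(FreeGroup ι, ∘)` with the free product of copies of `ℤ/2` that sends each
letter to a generating involution. -/
def circMulEquivUniversalCoxeterGroup (ι : Type*) [DecidableEq ι] :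
    (inversionAction ι).Circ ≃* UniversalCoxeterGroup (ι ⊕ ι) :=
  (freeToCoxeter ι).circMulEquiv (coxeterToFree ι)
    (freeGroup_hom_ext_letter fun k => by
      simp [freeToCoxeter_letter, TwistedHom.untwist_toCirc, coxeterToFree_of])
    (hom_ext fun k => by
      simp [coxeterToFree_of, TwistedHom.untwist_toCirc, freeToCoxeter_letter])

theorem stmt9_general (θ : MulAut (FreeGroup ι))
    (hθ : ∀ i, θ (FreeGroup.of i) = (FreeGroup.of i)⁻¹)
    (f : FreeGroup ι →* Multiplicative (ZMod 2)) (hf : ∀ i, f (FreeGroup.of i) = ofAdd 1) :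
    ∃ S : SkewBrace (FreeGroup ι),
      (∀ a ∈ f.ker, ∀ b : FreeGroup ι, S.circ a b = a * b) ∧
      (∀ a ∉ f.ker, ∀ b : FreeGroup ι, S.circ a b = a * θ b) ∧
      ∃ e : FreeGroup ι ≃ UniversalCoxeterGroup (ι ⊕ ι),
        ∀ a b : FreeGroup ι, e (S.circ a b) = e a * e b := by
  let D := inversionAction ι
  have deg_eq : D.deg = f := FreeGroup.ext_hom _ _ fun i =>
    (inversionAction_deg_letter (.inl i)).trans (hf i).symm
  have act_eq : (D.act (ofAdd 1)).toMonoidHom = θ.toMonoidHom := FreeGroup.ext_hom _ _ fun i =>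
    (inversionAction_act_letter (.inl i)).trans (hθ i).symm
  let e := circMulEquivUniversalCoxeterGroup ι
  refine ⟨D.brace, fun a ha b => ?_, fun a ha b => ?_, D.toCirc.trans e.toEquiv,
    fun a b => map_mul e (D.toCirc a) (D.toCirc b)⟩
  · rw [brace_circ, deg_eq, MonoidHom.mem_ker.1 ha, map_one, MulAut.one_apply]
  · rw [brace_circ, deg_eq, (eq_one_or_eq_ofAdd_one_s9 (f a)).resolve_left ha]
    exact congrArg (a * ·) (DFunLike.congr_fun act_eq b)

end FreeGroup

section Presentation

open UniversalCoxeterGroup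

variable {K L : Type*} [Group K] [Group L]

/-- The elements `s`, `s q`, `s p`, `s p r` for `g = ![p, q, r, s]`. -/
def involutionsOfPQRS (g : Fin 4 → K) : Fin 2 ⊕ Fin 2 → K :=
  Sum.elim ![g 3, g 3 * g 1] ![g 3 * g 0, g 3 * g 0 * g 2]

/-- The inverse substitution to `involutionsOfPQRS` on families of involutions. -/
def pqrsOfInvolutions (u : Fin 2 ⊕ Fin 2 → K) : Fin 4 → K :=
  ![u (.inl 0) * u (.inr 0), u (.inl 0) * u (.inl 1), u (.inr 0) * u (.inr 1), u (.inl 0)]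

lemma map_involutionsOfPQRS (φ : K →* L) (g : Fin 4 → K) (k : Fin 2 ⊕ Fin 2) :
    φ (involutionsOfPQRS g k) = involutionsOfPQRS (φ ∘ g) k := by
  rcases k with k | k <;> fin_cases k <;> simp [involutionsOfPQRS]

lemma map_pqrsOfInvolutions (φ : K →* L) (u : Fin 2 ⊕ Fin 2 → K) (i : Fin 4) :
    φ (pqrsOfInvolutions u i) = pqrsOfInvolutions (φ ∘ u) i := by
  fin_cases i <;> simp [pqrsOfInvolutions]

lemma involutionsOfPQRS_pqrsOfInvolutions {u : Fin 2 ⊕ Fin 2 → K} (hu : ∀ k, u k * u k = 1) :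
    involutionsOfPQRS (pqrsOfInvolutions u) = u := by
  have cancel (k w) : u k * (u k * w) = w := by rw [← mul_assoc, hu, one_mul]
  ext k
  rcases k with k | k <;> fin_cases k <;>
    simp [involutionsOfPQRS, pqrsOfInvolutions, cancel]

lemma pqrsOfInvolutions_involutionsOfPQRS {g : Fin 4 → K}
    (hg : ∀ k, involutionsOfPQRS g k * involutionsOfPQRS g k = 1) :
    pqrsOfInvolutions (involutionsOfPQRS g) = g := by
  have hs : g 3 * g 3 = 1 := hg (.inl 0)
  have hsp : g 3 * g 0 * (g 3 * g 0) = 1 := hg (.inr 0)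
  ext i
  fin_cases i
  · simp [pqrsOfInvolutions, involutionsOfPQRS, ← mul_assoc, hs]
  · simp [pqrsOfInvolutions, involutionsOfPQRS, ← mul_assoc, hs]
  · simp [pqrsOfInvolutions, involutionsOfPQRS, ← mul_assoc _ _ (g 2), hsp]
  · rfl

lemma srsprp_inv_eq_one_iff {p r s : K} (hs : s * s = 1) (hsp : s * p * (s * p) = 1) :
    s * r * s * p * r * p⁻¹ = 1 ↔ s * p * r * (s * p * r) = 1 := by
  have hs_inv : s⁻¹ = s := inv_eq_of_mul_eq_one_left hs
  have hp_inv : p⁻¹ = s * p * s⁻¹ := inv_eq_of_mul_eq_one_left <| by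
    rw [hs_inv, mul_assoc (s * p), hsp]
  have conj_eq : s * p * r * (s * p * r) = p⁻¹ * (s * r * s * p * r * p⁻¹) * p := by
    nth_rw 1 [hp_inv]
    group
  rw [conj_eq, ← conj_eq_one_iff (a := p⁻¹), inv_inv]

lemma forall_lift_relsF3Z2_eq_one_iff (g : Fin 4 → K) :
    (∀ w ∈ relsF3Z2, FreeGroup.lift g w = 1) ↔
      ∀ k, involutionsOfPQRS g k * involutionsOfPQRS g k = 1 := by
  suffices
      g 3 * g 3 = 1 ∧ g 3 * g 0 * g 3 * g 0 = 1 ∧ g 3 * g 1 * g 3 * g 1 = 1 ∧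
          g 3 * g 2 * g 3 * g 0 * g 2 * (g 0)⁻¹ = 1 ↔
        (g 3 * g 3 = 1 ∧ g 3 * g 1 * (g 3 * g 1) = 1) ∧
          g 3 * g 0 * (g 3 * g 0) = 1 ∧ g 3 * g 0 * g 2 * (g 3 * g 0 * g 2) = 1 by
    simpa [relsF3Z2, involutionsOfPQRS, Fin.forall_fin_two] using this
  rw [mul_assoc (g 3 * g 0) (g 3), mul_assoc (g 3 * g 1) (g 3)]
  constructor
  · rintro ⟨hs, hsp, hsq, hsr⟩
    exact ⟨⟨hs, hsq⟩, hsp, (srsprp_inv_eq_one_iff hs hsp).1 hsr⟩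
  · rintro ⟨⟨hs, hsq⟩, hsp, hspr⟩
    exact ⟨hs, hsp, hsq, (srsprp_inv_eq_one_iff hs hsp).2 hspr⟩

lemma involutionsOfPQRS_of_mul_self (k : Fin 2 ⊕ Fin 2) :
    involutionsOfPQRS (PresentedGroup.of (rels := relsF3Z2)) k *
      involutionsOfPQRS PresentedGroup.of k = 1 := by
  have lift_of : FreeGroup.lift PresentedGroup.of = PresentedGroup.mk relsF3Z2 :=
    FreeGroup.ext_hom _ _ fun i => FreeGroup.lift_apply_of
  refine (forall_lift_relsF3Z2_eq_one_iff _).1 (fun w hw => ?_) k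
  rw [lift_of, PresentedGroup.one_of_mem hw]

lemma lift_pqrsOfInvolutions_of {w : FreeGroup (Fin 4)} (hw : w ∈ relsF3Z2) :
    FreeGroup.lift (pqrsOfInvolutions (of (κ := Fin 2 ⊕ Fin 2))) w = 1 := by
  refine (forall_lift_relsF3Z2_eq_one_iff _).2 ?_ w hw
  rw [involutionsOfPQRS_pqrsOfInvolutions of_mul_self]
  exact of_mul_self

/-- The homomorphism that sends the four generating involutions to `s`, `s q`, `s p`, `s p r`. -/
def coxeterToPresented : UniversalCoxeterGroup (Fin 2 ⊕ Fin 2) →* PresentedGroup relsF3Z2 :=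
  lift (involutionsOfPQRS PresentedGroup.of) involutionsOfPQRS_of_mul_self

/-- The inverse of `coxeterToPresented`, which sends `p`, `q`, `r`, `s` to the words of
`pqrsOfInvolutions` in the four involutions. -/
def presentedToCoxeter : PresentedGroup relsF3Z2 →* UniversalCoxeterGroup (Fin 2 ⊕ Fin 2) :=
  PresentedGroup.toGroup fun _ => lift_pqrsOfInvolutions_of

lemma coxeterToPresented_comp_of :
    coxeterToPresented ∘ of = involutionsOfPQRS PresentedGroup.of :=
  funext fun k => lift_of _ involutionsOfPQRS_of_mul_self k

lemma presentedToCoxeter_comp_of :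
    presentedToCoxeter ∘ PresentedGroup.of = pqrsOfInvolutions of :=
  funext fun _ => PresentedGroup.toGroup.of fun _ => lift_pqrsOfInvolutions_of

/-- The Tietze transformation between the presentations on the four involutions `s`, `s q`, `s p`,
`s p r` and on `p`, `q`, `r`, `s`. -/
def universalCoxeterGroupMulEquivPresentedGroup :
    UniversalCoxeterGroup (Fin 2 ⊕ Fin 2) ≃* PresentedGroup relsF3Z2 :=
  MonoidHom.toMulEquiv coxeterToPresented presentedToCoxeter
    (hom_ext fun k => calc
      presentedToCoxeter (coxeterToPresented (of k))
      _ = presentedToCoxeter (involutionsOfPQRS PresentedGroup.of k) :=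
        congrArg _ (congrFun coxeterToPresented_comp_of k)
      _ = involutionsOfPQRS (pqrsOfInvolutions of) k := by
        rw [map_involutionsOfPQRS, presentedToCoxeter_comp_of]
      _ = of k := congrFun (involutionsOfPQRS_pqrsOfInvolutions of_mul_self) k)
    (PresentedGroup.ext fun i => calc
      coxeterToPresented (presentedToCoxeter (PresentedGroup.of i))
      _ = coxeterToPresented (pqrsOfInvolutions of i) :=
        congrArg _ (congrFun presentedToCoxeter_comp_of i)
      _ = pqrsOfInvolutions (involutionsOfPQRS PresentedGroup.of) i := by
        rw [map_pqrsOfInvolutions, coxeterToPresented_comp_of]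
      _ = PresentedGroup.of i :=
        congrFun (pqrsOfInvolutions_involutionsOfPQRS involutionsOfPQRS_of_mul_self) i)

end Presentation

/-- Let `F₂` be the free group on `x, y`, let `θ` be the
automorphism with `θ x = x⁻¹` and `θ y = y⁻¹`, and let `H₀` be the kernel of
the homomorphism `F₂ → ℤ/2ℤ` sending both generators to the generator.
Define `a ∘ b = a * b` for `a ∈ H₀` and `a ∘ b = a * θ b` otherwise.  Then
`(F₂, ·, ∘)` is a skew left brace and `(F₂, ∘)` is isomorphic to the group
presented by `⟨p, q, r, s ∣ s² = 1, s p s = p⁻¹, s q s = q⁻¹,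
s r s = p r⁻¹ p⁻¹⟩`, i.e. to a semidirect product `F₃ ⋊ ℤ/2ℤ`. -/
theorem stmt9 (θ : MulAut (FreeGroup (Fin 2)))
    (hθx : θ (FreeGroup.of 0) = (FreeGroup.of 0)⁻¹)
    (hθy : θ (FreeGroup.of 1) = (FreeGroup.of 1)⁻¹)
    (f : FreeGroup (Fin 2) →* Multiplicative (ZMod 2))
    (hfx : f (FreeGroup.of 0) = Multiplicative.ofAdd 1)
    (hfy : f (FreeGroup.of 1) = Multiplicative.ofAdd 1) :
    ∃ S : SkewBrace (FreeGroup (Fin 2)),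
      (∀ a ∈ f.ker, ∀ b : FreeGroup (Fin 2), S.circ a b = a * b) ∧
      (∀ a ∉ f.ker, ∀ b : FreeGroup (Fin 2), S.circ a b = a * θ b) ∧
      ∃ e : FreeGroup (Fin 2) ≃ PresentedGroup relsF3Z2,
        ∀ a b : FreeGroup (Fin 2), e (S.circ a b) = e a * e b := by
  obtain ⟨S, hker, hnker, e, he⟩ :=
    stmt9_general θ (Fin.forall_fin_two.2 ⟨hθx, hθy⟩) f (Fin.forall_fin_two.2 ⟨hfx, hfy⟩)
  exact ⟨S, hker, hnker, e.trans universalCoxeterGroupMulEquivPresentedGroup.toEquiv,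
    fun a b => by simp [he]⟩
end

section
/- A skew left brace (G, ·, ∘) is symmetric if and only if b̄ ∘ (a·b) ∘ ā ∈ ker λ for all a, b ∈ G, where ā and b̄ denote the inverses of a and b in (G, ∘) and ker λ = {g ∈ G : λ_g = id}. -/
/-! Since `λ` is a homomorphism from `(G, ∘)` to `Aut (G, ·)`, both conditions say that `λ` is an
antihomomorphism on `(G, ·)`. Indeed `a * (b ∘ c) = a * b * λ_b c`, while
`(a * b) ∘ (ā ∘ (a * c)) = a * b * λ_{a * b} (λ_a⁻¹ c)`, so symmetry amounts to
`λ_{a * b} = λ_b λ_a`; and `λ` sends `b̄ ∘ (a * b) ∘ ā` to `λ_b⁻¹ λ_{a * b} λ_a⁻¹`. -/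

namespace SkewBrace

variable {G : Type*} [Group G] (B : SkewBrace G)

/-- The lambda map `λ_a b = a⁻¹ * (a ∘ b)` of a skew left brace, bundled as an automorphism of
`(G, ·)` so that identities between its values can be computed in the group `MulAut G`. -/
def lam (a : G) : MulAut G where
  toFun b := a⁻¹ * B.circ a b
  invFun c := B.circ (B.cinv a) (a * c)
  left_inv b := by simp only [mul_inv_cancel_left, ← B.circ_assoc, B.cinv_circ, B.one_circ]
  right_inv c := by simp only [← B.circ_assoc, B.circ_cinv, B.one_circ, inv_mul_cancel_left]
  map_mul' b c := by simp only [B.compat, mul_assoc]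

theorem lam_apply (a b : G) : B.lam a b = a⁻¹ * B.circ a b := rfl

theorem lam_inv_apply (a c : G) : (B.lam a)⁻¹ c = B.circ (B.cinv a) (a * c) := rfl

theorem circ_eq_mul_lam (a b : G) : B.circ a b = a * B.lam a b := by
  rw [lam_apply, mul_inv_cancel_left]

theorem lam_one : B.lam 1 = 1 := by
  ext c
  rw [lam_apply, B.one_circ, inv_one, one_mul, MulAut.one_apply]

theorem lam_circ (a b : G) : B.lam (B.circ a b) = B.lam a * B.lam b := by
  ext c
  calc B.lam (B.circ a b) c
      = (B.circ a b)⁻¹ * B.circ a (B.circ b c) := by rw [lam_apply, B.circ_assoc]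
    _ = (B.lam a b)⁻¹ * B.lam a (B.circ b c) := by simp only [lam_apply]; group
    _ = B.lam a (B.lam b c) := by rw [B.lam_apply b c, map_mul, map_inv]

theorem lam_cinv (a : G) : B.lam (B.cinv a) = (B.lam a)⁻¹ :=
  eq_inv_of_mul_eq_one_left <| by rw [← lam_circ, B.cinv_circ, lam_one]

theorem lam_eq_one_iff (g : G) : B.lam g = 1 ↔ ∀ c, B.circ g c = g * c := by
  simp only [MulEquiv.ext_iff, circ_eq_mul_lam, mul_right_inj, MulAut.one_apply]

theorem lam_mul_eq_iff_mul_circ_eq (a b : G) :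
    B.lam (a * b) = B.lam b * B.lam a ↔
      ∀ c, a * B.circ b c = B.circ (B.circ (a * b) (B.cinv a)) (a * c) := by
  have expand_left (c : G) : a * B.circ b c = a * b * B.lam b c := by
    rw [circ_eq_mul_lam, mul_assoc]
  have expand_right (c : G) : B.circ (B.circ (a * b) (B.cinv a)) (a * c) =
      a * b * (B.lam (a * b) * (B.lam a)⁻¹) c := by
    rw [B.circ_assoc, ← lam_inv_apply, circ_eq_mul_lam, MulAut.mul_apply]
  simp only [expand_left, expand_right, mul_right_inj]
  rw [← MulEquiv.ext_iff, eq_mul_inv_iff_mul_eq, eq_comm]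

theorem lam_mul_eq_iff_lam_circ_eq_one (a b : G) :
    B.lam (a * b) = B.lam b * B.lam a ↔
      B.lam (B.circ (B.circ (B.cinv b) (a * b)) (B.cinv a)) = 1 := by
  rw [lam_circ, lam_circ, lam_cinv, lam_cinv, mul_inv_eq_one, inv_mul_eq_iff_eq_mul]

end SkewBrace

/-- A skew left brace `(G, ·, ∘)` is symmetric (i.e.
`(G, ∘, ·)` is also a skew left brace:
`a * (b ∘ c) = ((a * b) ∘ ā) ∘ (a * c)` for all `a b c`) if and only if
`b̄ ∘ (a * b) ∘ ā ∈ ker λ` for all `a b : G`, where an element `g` lies in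
`ker λ` precisely when `g ∘ c = g * c` for all `c`. -/
theorem stmt15 {G : Type*} [Group G] (B : SkewBrace G) :
    (∀ a b c : G,
        a * B.circ b c = B.circ (B.circ (a * b) (B.cinv a)) (a * c)) ↔
      (∀ a b : G, ∀ c : G,
        B.circ (B.circ (B.circ (B.cinv b) (a * b)) (B.cinv a)) c =
          B.circ (B.circ (B.cinv b) (a * b)) (B.cinv a) * c) := by
  refine forall₂_congr fun a b => ?_
  rw [← B.lam_mul_eq_iff_mul_circ_eq, B.lam_mul_eq_iff_lam_circ_eq_one, B.lam_eq_one_iff]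
end

section
/- Let G be a group with an exact factorization G = A·B, where A is a normal subgroup of G, B is a subgroup of G, A ∩ B = 1, and every element of G is (uniquely) a product a·b with a ∈ A, b ∈ B. Define an operation ∘ on G by (a₁·b₁) ∘ (a₂·b₂) = a₁·a₂·b₂·b₁ for a₁,a₂ ∈ A and b₁,b₂ ∈ B. Then (G, ·, ∘) is a skew left brace, the group (G, ∘) is isomorphic to the direct product A × B^op (B^op the opposite group of B), and this skew brace is symmetric, i.e., (G, ∘, ·) is also a skew left brace. -/
/-!
In an exact factorization `G = A · B`, write `x = α x * β x`. Transporting the group structure of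
`A × Bᵐᵒᵖ` along the bijection `x ↦ (α x, β x)` gives `x ∘ y = α x * y * β x`, a formula from which
the skew brace law is immediate. When `A` is normal, `x * y = (x * α y * x⁻¹) * α x * (β x * β y)`,
so the coordinates of `x * y` are the product in `A × Bᵐᵒᵖ` of `(x * α y * x⁻¹, β y)` with those of
`x`. Cancelling the latter gives `(x * y) ∘ x̄ = x * α y * x⁻¹ * β y`, and symmetry follows.
-/

namespace SkewBrace

/-- A skew brace `(G, ·, ∘)` is symmetric when `(G, ∘, ·)` is also a skew left brace. As both
operations are already groups, this is the compatibility law with their roles exchanged. -/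
def IsSymmetric {G : Type*} [Group G] (S : SkewBrace G) : Prop :=
  ∀ x y z : G, x * S.circ y z = S.circ (S.circ (x * y) (S.cinv x)) (x * z)

section Transport

variable {G H : Type*} [Group G] [Group H] (e : G ≃ H)

theorem equiv_one_of_compat
    (compat : ∀ a b c : G,
      e.symm (e a * e (b * c)) = e.symm (e a * e b) * a⁻¹ * e.symm (e a * e c)) :
    e 1 = 1 := by
  have circ_one : e.symm (e 1 * e 1) = 1 := by simpa using compat 1 1 1
  exact mul_eq_left.mp ((Equiv.symm_apply_eq e).mp circ_one)

/-- The skew brace on `G` whose operation `∘` is transported from a group `H` along a bijection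
`e : G ≃ H`, given the compatibility of `∘` with the multiplication of `G`. -/
def ofEquiv
    (compat : ∀ a b c : G,
      e.symm (e a * e (b * c)) = e.symm (e a * e b) * a⁻¹ * e.symm (e a * e c)) :
    SkewBrace G where
  circ x y := e.symm (e x * e y)
  cinv x := e.symm (e x)⁻¹
  circ_assoc a b c := by simp only [Equiv.apply_symm_apply, mul_assoc]
  one_circ a := by simp only [equiv_one_of_compat e compat, one_mul, Equiv.symm_apply_apply]
  circ_one a := by simp only [equiv_one_of_compat e compat, mul_one, Equiv.symm_apply_apply]
  cinv_circ a := by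
    rw [Equiv.apply_symm_apply, inv_mul_cancel, Equiv.symm_apply_eq, equiv_one_of_compat e compat]
  circ_cinv a := by
    rw [Equiv.apply_symm_apply, mul_inv_cancel, Equiv.symm_apply_eq, equiv_one_of_compat e compat]
  compat := compat

end Transport

section Factorization

variable {G : Type*} [Group G] {A B : Subgroup G} (h : A.IsComplement' B)

/-- The coordinates `a * b ↦ (a, b)` of an exact factorization `G = A · B`, with the second one
placed in the opposite group so that multiplying coordinates gives the operation `∘`. -/
noncomputable def factorEquiv : G ≃ A × Bᵐᵒᵖ :=
  (Subgroup.IsComplement.equiv h).trans ((Equiv.refl A).prodCongr MulOpposite.opEquiv)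

theorem factorEquiv_symm_apply (p : A × Bᵐᵒᵖ) :
    (factorEquiv h).symm p = p.1 * p.2.unop :=
  rfl

theorem factorEquiv_fst_mul_snd (x : G) :
    ((factorEquiv h x).1 * (factorEquiv h x).2.unop : G) = x :=
  (factorEquiv h).symm_apply_apply x

theorem factorEquiv_mul_of_mem {a b : G} (ha : a ∈ A) (hb : b ∈ B) :
    factorEquiv h (a * b) = (⟨a, ha⟩, MulOpposite.op ⟨b, hb⟩) :=
  (factorEquiv h).apply_symm_apply (⟨a, ha⟩, MulOpposite.op ⟨b, hb⟩)

theorem factorEquiv_symm_mul (p : A × Bᵐᵒᵖ) (y : G) :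
    (factorEquiv h).symm (p * factorEquiv h y) = p.1 * y * p.2.unop := by
  calc (factorEquiv h).symm (p * factorEquiv h y)
      = p.1 * ((factorEquiv h y).1 * (factorEquiv h y).2.unop) * p.2.unop := by
        simp only [factorEquiv_symm_apply, Prod.fst_mul, Prod.snd_mul, MulOpposite.unop_mul,
          Subgroup.coe_mul, mul_assoc]
    _ = p.1 * y * p.2.unop := by rw [factorEquiv_fst_mul_snd]

/-- The skew brace of an exact factorization `G = A · B`, with `∘` given by
`(a₁ * b₁) ∘ (a₂ * b₂) = a₁ * a₂ * b₂ * b₁`. -/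
noncomputable def ofIsComplement : SkewBrace G :=
  ofEquiv (factorEquiv h) fun x y z => by
    have inv_eq : x⁻¹ = ((factorEquiv h x).2.unop : G)⁻¹ * ((factorEquiv h x).1 : G)⁻¹ := by
      rw [← mul_inv_rev, factorEquiv_fst_mul_snd]
    simp only [factorEquiv_symm_mul, inv_eq]
    group

theorem factorEquiv_circ (x y : G) :
    factorEquiv h ((ofIsComplement h).circ x y) = factorEquiv h x * factorEquiv h y :=
  (factorEquiv h).apply_symm_apply _

theorem factorEquiv_cinv (x : G) :
    factorEquiv h ((ofIsComplement h).cinv x) = (factorEquiv h x)⁻¹ :=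
  (factorEquiv h).apply_symm_apply _

theorem circ_ofIsComplement (x y : G) :
    (ofIsComplement h).circ x y = (factorEquiv h x).1 * y * (factorEquiv h x).2.unop :=
  factorEquiv_symm_mul h _ y

theorem circ_ofIsComplement_of_mem {a b : G} (ha : a ∈ A) (hb : b ∈ B) (y : G) :
    (ofIsComplement h).circ (a * b) y = a * y * b := by
  rw [circ_ofIsComplement, factorEquiv_mul_of_mem h ha hb, MulOpposite.unop_op]

theorem factorEquiv_mul [A.Normal] (x y : G) :
    factorEquiv h (x * y) =
      (MulAut.conjNormal x (factorEquiv h y).1, (factorEquiv h y).2) * factorEquiv h x := by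
  rw [← Equiv.eq_symm_apply, factorEquiv_symm_mul, MulAut.conjNormal_apply, inv_mul_cancel_right,
    mul_assoc, factorEquiv_fst_mul_snd]

theorem isSymmetric_ofIsComplement [A.Normal] : (ofIsComplement h).IsSymmetric := by
  intro x y z
  have coords : factorEquiv h ((ofIsComplement h).circ (x * y) ((ofIsComplement h).cinv x)) =
      (MulAut.conjNormal x (factorEquiv h y).1, (factorEquiv h y).2) := by
    rw [factorEquiv_circ, factorEquiv_cinv, factorEquiv_mul, mul_inv_cancel_right]
  simp only [circ_ofIsComplement _ _ z, circ_ofIsComplement _ _ (x * z), coords,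
    MulAut.conjNormal_apply]
  group

end Factorization

end SkewBrace

/-- Let `G = A · B` be an exact factorization (`A ⊴ G`,
`B ≤ G`, `A ∩ B = 1`, every element of `G` is a product `a * b` with `a ∈ A`,
`b ∈ B`) and let `∘` be the operation with
`(a₁ * b₁) ∘ (a₂ * b₂) = a₁ * a₂ * b₂ * b₁`.  Then `(G, ·, ∘)` is a skew
left brace, `(G, ∘)` is isomorphic to `A × Bᵒᵖ`, and the skew brace is
symmetric, i.e. `(G, ∘, ·)` is also a skew left brace. -/
theorem stmt18 {G : Type*} [Group G] (A B : Subgroup G) [A.Normal]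
    (hAB : A ⊓ B = ⊥)
    (hfact : ∀ g : G, ∃ a ∈ A, ∃ b ∈ B, g = a * b)
    (circ : G → G → G)
    (hcirc : ∀ a₁ ∈ A, ∀ b₁ ∈ B, ∀ a₂ ∈ A, ∀ b₂ ∈ B,
      circ (a₁ * b₁) (a₂ * b₂) = a₁ * a₂ * b₂ * b₁) :
    ∃ S : SkewBrace G, S.circ = circ ∧
      (∃ e : G ≃ A × (↥B)ᵐᵒᵖ, ∀ x y : G, e (circ x y) = e x * e y) ∧
      (∀ x y z : G,
        x * circ y z = circ (circ (x * y) (S.cinv x)) (x * z)) := by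
  have h : A.IsComplement' B := by
    refine Subgroup.isComplement'_of_disjoint_and_mul_eq_univ (disjoint_iff.mpr hAB) ?_
    refine Set.eq_univ_of_forall fun g => ?_
    obtain ⟨a, ha, b, hb, rfl⟩ := hfact g
    exact Set.mul_mem_mul ha hb
  have circ_eq : (SkewBrace.ofIsComplement h).circ = circ := by
    funext x y
    obtain ⟨a₁, ha₁, b₁, hb₁, rfl⟩ := hfact x
    obtain ⟨a₂, ha₂, b₂, hb₂, rfl⟩ := hfact y
    rw [hcirc a₁ ha₁ b₁ hb₁ a₂ ha₂ b₂ hb₂, SkewBrace.circ_ofIsComplement_of_mem h ha₁ hb₁,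
      mul_assoc a₁ a₂ b₂]
  subst circ_eq
  exact ⟨SkewBrace.ofIsComplement h, rfl,
    ⟨SkewBrace.factorEquiv h, SkewBrace.factorEquiv_circ h⟩,
    SkewBrace.isSymmetric_ofIsComplement h⟩
end

section
/- Let G be a group with an exact factorization G = A·B, where A is a normal subgroup of G, B is a subgroup of G, A ∩ B = 1, and every element z ∈ G is uniquely z = a·b with a ∈ A, b ∈ B. Consider the skew left brace (G, ·, ∘) with (a₁·b₁) ∘ (a₂·b₂) = a₁·a₂·b₂·b₁; its associated map λ sends z = a·b to the inner automorphism λ_z(y) = b⁻¹·y·b. If B is abelian, then λ : (G, ·) → Aut(G, ·), z ↦ λ_z, is a group homomorphism; that is, the skew brace (G, ·, ∘) is λ-homomorphic. -/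
/-!
Substituting `y = a₂ * b₂` into the formula for `∘` gives `(a * b) ∘ y = a * y * b`, so `λ_{a * b}`
is conjugation by `b⁻¹`. Since `A` is normal, the `B`-part of a product `(a * b) * (c * d)` is
`b * d`. Hence `λ` is multiplicative exactly when conjugation by `b * d` and by `d * b` agree for
all `b, d ∈ B`, that is, when `⁅b, d⁆` is central in `G`.
-/

/-- `circ` is the second operation `(a₁ * b₁) ∘ (a₂ * b₂) = a₁ * a₂ * b₂ * b₁` of the skew brace
attached to a factorization by `A` and `B`. When factorizations are not unique, this includes the
requirement that the formula does not depend on them. -/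
def IsFactorizationCirc {G : Type*} [Mul G] (A B : Set G) (circ : G → G → G) : Prop :=
  ∀ a₁ ∈ A, ∀ b₁ ∈ B, ∀ a₂ ∈ A, ∀ b₂ ∈ B, circ (a₁ * b₁) (a₂ * b₂) = a₁ * a₂ * b₂ * b₁

/-- The map `λ_z (y) = z⁻¹ * (z ∘ y)` of a skew brace with second operation `circ`. It is defined
for every binary operation `circ`, and is a plain function rather than an element of `MulAut G`. -/
def braceLambda {G : Type*} [Group G] (circ : G → G → G) (z y : G) : G :=
  z⁻¹ * circ z y

/-- The condition `λ_{z * w} = λ_z ∘ λ_w` defining λ-homomorphic skew braces, stated pointwise. -/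
def IsLambdaHomomorphic {G : Type*} [Group G] (circ : G → G → G) : Prop :=
  ∀ z w y : G, braceLambda circ (z * w) y = braceLambda circ z (braceLambda circ w y)

theorem IsFactorizationCirc.circ_mul_eq {G : Type*} [Semigroup G] {A B : Set G}
    {circ : G → G → G} (hcirc : IsFactorizationCirc A B circ)
    (hfact : ∀ g : G, ∃ a ∈ A, ∃ b ∈ B, g = a * b)
    {a b : G} (ha : a ∈ A) (hb : b ∈ B) (y : G) :
    circ (a * b) y = a * y * b := by
  obtain ⟨a₂, ha₂, b₂, hb₂, rfl⟩ := hfact y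
  rw [hcirc a ha b hb a₂ ha₂ b₂ hb₂, mul_assoc a a₂ b₂]

section Group

open scoped commutatorElement

variable {G : Type*} [Group G]

theorem IsFactorizationCirc.braceLambda_mul_eq_conj {A B : Set G} {circ : G → G → G}
    (hcirc : IsFactorizationCirc A B circ) (hfact : ∀ g : G, ∃ a ∈ A, ∃ b ∈ B, g = a * b)
    {a b : G} (ha : a ∈ A) (hb : b ∈ B) (y : G) :
    braceLambda circ (a * b) y = b⁻¹ * y * b := by
  rw [braceLambda, hcirc.circ_mul_eq hfact ha hb]
  group

theorem exists_mem_mul_mul_mul_eq (A : Subgroup G) [A.Normal] {a c : G}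
    (ha : a ∈ A) (hc : c ∈ A) (b d : G) :
    ∃ a' ∈ A, a * b * (c * d) = a' * (b * d) :=
  ⟨a * (b * c * b⁻¹), A.mul_mem ha (‹A.Normal›.conj_mem c hc b), by group⟩

theorem commutatorElement_mem_center_iff_conj_mul_eq (b d : G) :
    ⁅b, d⁆ ∈ Subgroup.center G ↔
      ∀ y : G, (b * d)⁻¹ * y * (b * d) = b⁻¹ * (d⁻¹ * y * d) * b := by
  have conj_mul_eq_iff (y : G) : (b * d)⁻¹ * y * (b * d) = b⁻¹ * (d⁻¹ * y * d) * b ↔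
      y * ⁅b, d⁆ = ⁅b, d⁆ * y := by
    rw [← mul_right_inj (b * d), ← mul_left_inj (d * b)⁻¹, commutatorElement_def]
    group
  simp only [Subgroup.mem_center_iff, conj_mul_eq_iff]

variable {A B : Subgroup G} {circ : G → G → G}

theorem IsFactorizationCirc.commutator_le_center
    (hcirc : IsFactorizationCirc (A : Set G) B circ)
    (hfact : ∀ g : G, ∃ a ∈ A, ∃ b ∈ B, g = a * b) (hlambda : IsLambdaHomomorphic circ) :
    ⁅B, B⁆ ≤ Subgroup.center G := by
  have lambda_of_mem {b : G} (hb : b ∈ B) (y : G) : braceLambda circ b y = b⁻¹ * y * b := by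
    simpa only [one_mul] using hcirc.braceLambda_mul_eq_conj hfact A.one_mem hb y
  refine Subgroup.commutator_le.2 fun b hb d hd ↦
    (commutatorElement_mem_center_iff_conj_mul_eq b d).2 fun y ↦ ?_
  simpa only [lambda_of_mem, hb, hd, B.mul_mem hb hd] using hlambda b d y

theorem IsFactorizationCirc.isLambdaHomomorphic [A.Normal]
    (hcirc : IsFactorizationCirc (A : Set G) B circ)
    (hfact : ∀ g : G, ∃ a ∈ A, ∃ b ∈ B, g = a * b) (hB : ⁅B, B⁆ ≤ Subgroup.center G) :
    IsLambdaHomomorphic circ := by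
  intro z w y
  obtain ⟨a, ha, b, hb, rfl⟩ := hfact z
  obtain ⟨c, hc, d, hd, rfl⟩ := hfact w
  obtain ⟨a', ha', hmul⟩ := exists_mem_mul_mul_mul_eq A ha hc b d
  calc braceLambda circ (a * b * (c * d)) y
      = (b * d)⁻¹ * y * (b * d) := by
        rw [hmul, hcirc.braceLambda_mul_eq_conj hfact ha' (B.mul_mem hb hd)]
    _ = b⁻¹ * (d⁻¹ * y * d) * b :=
        (commutatorElement_mem_center_iff_conj_mul_eq b d).1
          (hB (Subgroup.commutator_mem_commutator hb hd)) y
    _ = braceLambda circ (a * b) (braceLambda circ (c * d) y) := by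
        rw [hcirc.braceLambda_mul_eq_conj hfact ha hb, hcirc.braceLambda_mul_eq_conj hfact hc hd]

end Group

theorem stmt19_general {G : Type*} [Group G] (A B : Subgroup G) [A.Normal]
    (hfact : ∀ g : G, ∃ a ∈ A, ∃ b ∈ B, g = a * b)
    (circ : G → G → G) (hcirc : IsFactorizationCirc (A : Set G) B circ) :
    (∀ a ∈ A, ∀ b ∈ B, ∀ y : G, braceLambda circ (a * b) y = b⁻¹ * y * b) ∧
    (IsLambdaHomomorphic circ ↔ ⁅B, B⁆ ≤ Subgroup.center G) :=
  ⟨fun _ ha _ hb ↦ hcirc.braceLambda_mul_eq_conj hfact ha hb,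
    hcirc.commutator_le_center hfact, hcirc.isLambdaHomomorphic hfact⟩

/-- Let `G = A · B` be an exact factorization (`A ⊴ G`,
`B ≤ G`, `A ∩ B = 1`, every element of `G` is a product `a * b` with `a ∈ A`,
`b ∈ B`), and let `∘` be the skew brace operation
`(a₁ * b₁) ∘ (a₂ * b₂) = a₁ * a₂ * b₂ * b₁`, whose associated map `λ` sends
`z = a * b` to the inner automorphism `λ_z (y) = b⁻¹ * y * b` (first
conjunct).  If `B` is abelian, then `λ : (G, ·) → Aut (G, ·)` is a group
homomorphism, i.e. `λ_{z·w} = λ_z ∘ λ_w` (second conjunct): the skew brace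
is λ-homomorphic. -/
theorem stmt19 {G : Type*} [Group G] (A B : Subgroup G) [A.Normal]
    (hAB : A ⊓ B = ⊥)
    (hfact : ∀ g : G, ∃ a ∈ A, ∃ b ∈ B, g = a * b)
    (hBcomm : ∀ b₁ ∈ B, ∀ b₂ ∈ B, b₁ * b₂ = b₂ * b₁)
    (circ : G → G → G)
    (hcirc : ∀ a₁ ∈ A, ∀ b₁ ∈ B, ∀ a₂ ∈ A, ∀ b₂ ∈ B,
      circ (a₁ * b₁) (a₂ * b₂) = a₁ * a₂ * b₂ * b₁) :
    (∀ a ∈ A, ∀ b ∈ B, ∀ y : G,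
      (a * b)⁻¹ * circ (a * b) y = b⁻¹ * y * b) ∧
    (∀ z w y : G,
      (z * w)⁻¹ * circ (z * w) y = z⁻¹ * circ z (w⁻¹ * circ w y)) :=
  (stmt19_general A B hfact circ hcirc).imp_right fun h ↦ h.2 <| Subgroup.commutator_le.2
    fun b hb d hd ↦ commutatorElement_eq_one_iff_mul_comm.2 (hBcomm b hb d hd) ▸ one_mem _
end
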